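/- For every positive integer m ≥ 4, the maximum of γ(K), as K runs through all non-simplicial polyhedral cones with exactly m extreme rays (i.e., all K ∈ P(m,n) with 3 ≤ n < m), equals m² − 3m + 3 if m is even and m² − 3m + 2 if m is odd. That is: every K-primitive matrix A on such a cone K satisfies γ(A) ≤ m² − 3m + 3 (m even) resp. γ(A) ≤ m² − 3m + 2 (m odd), and these bounds are attained by some such K and K-primitive A. -/

import Mathlib

open Matrix Set Real

noncomputable section

/-- A proper cone in `ℝ^n`: a closed convex cone that is pointed and full. -/
def IsProperCone {n : ℕ} (K : Set (Fin n → ℝ)) : Prop :=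
  IsClosed K ∧ (∀ x ∈ K, ∀ y ∈ K, x + y ∈ K) ∧
    (∀ (c : ℝ), 0 ≤ c → ∀ x ∈ K, c • x ∈ K) ∧
    K ∩ (-K) = {0} ∧ (interior K).Nonempty

/-- The positive hull (cone generated by) finitely many vectors. -/
def ConeGen {n m : ℕ} (y : Fin m → Fin n → ℝ) : Set (Fin n → ℝ) :=
  {x | ∃ c : Fin m → ℝ, (∀ j, 0 ≤ c j) ∧ x = ∑ j, c j • y j}

/-- A polyhedral cone: a proper cone that is the positive hull of finitely many vectors. -/
def IsPolyhedralCone {n : ℕ} (K : Set (Fin n → ℝ)) : Prop :=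
  IsProperCone K ∧ ∃ (m : ℕ) (y : Fin m → Fin n → ℝ), K = ConeGen y

/-- `A` is `K`-nonnegative: `A K ⊆ K`. -/
def KNonneg {n : ℕ} (K : Set (Fin n → ℝ)) (A : Matrix (Fin n) (Fin n) ℝ) : Prop :=
  ∀ x ∈ K, A.mulVec x ∈ K

/-- `A` is `K`-positive: `A` maps `K \ {0}` into the interior of `K`. -/
def KPositive {n : ℕ} (K : Set (Fin n → ℝ)) (A : Matrix (Fin n) (Fin n) ℝ) : Prop :=
  ∀ x ∈ K, x ≠ 0 → A.mulVec x ∈ interior K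

/-- `A` is `K`-primitive: `A` is `K`-nonnegative and some power of `A` is `K`-positive. -/
def KPrimitive {n : ℕ} (K : Set (Fin n → ℝ)) (A : Matrix (Fin n) (Fin n) ℝ) : Prop :=
  KNonneg K A ∧ ∃ k : ℕ, 0 < k ∧ KPositive K (A ^ k)

/-- The exponent `γ(A)` of a `K`-primitive matrix: the least `k ≥ 1` with `A^k` `K`-positive. -/
def expnt {n : ℕ} (K : Set (Fin n → ℝ)) (A : Matrix (Fin n) (Fin n) ℝ) : ℕ :=
  sInf {k : ℕ | 0 < k ∧ KPositive K (A ^ k)}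

/-- `x` is an extreme vector of `K`. -/
def IsExtremeVec {n : ℕ} (K : Set (Fin n → ℝ)) (x : Fin n → ℝ) : Prop :=
  x ∈ K ∧ x ≠ 0 ∧ ∀ y ∈ K, ∀ z ∈ K, x = y + z →
    (∃ a : ℝ, 0 ≤ a ∧ y = a • x) ∧ (∃ b : ℝ, 0 ≤ b ∧ z = b • x)

/-- The set of extreme rays of `K`. -/
def ExtremeRays {n : ℕ} (K : Set (Fin n → ℝ)) : Set (Set (Fin n → ℝ)) :=
  {R | ∃ x, IsExtremeVec K x ∧ R = {y | ∃ c : ℝ, 0 ≤ c ∧ y = c • x}}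

/-- `K ∈ P(m,n)`: an `n`-dimensional polyhedral cone in `ℝ^n` with exactly `m` extreme rays.
(A proper cone in `ℝ^n` has nonempty interior, hence is automatically `n`-dimensional.) -/
def MemP {n : ℕ} (m : ℕ) (K : Set (Fin n → ℝ)) : Prop :=
  IsPolyhedralCone K ∧ (ExtremeRays K).ncard = m

/-- A face of a cone `K`. -/
def IsFace {n : ℕ} (K F : Set (Fin n → ℝ)) : Prop :=
  0 ∈ F ∧ F ⊆ K ∧ (∀ x ∈ F, ∀ y ∈ F, x + y ∈ F) ∧
    (∀ (c : ℝ), 0 ≤ c → ∀ x ∈ F, c • x ∈ F) ∧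
    ∀ x ∈ F, ∀ y ∈ K, x - y ∈ K → y ∈ F

/-- `A` is `K`-irreducible: `A` is `K`-nonnegative and leaves invariant no nontrivial face. -/
def KIrreducible {n : ℕ} (K : Set (Fin n → ℝ)) (A : Matrix (Fin n) (Fin n) ℝ) : Prop :=
  KNonneg K A ∧ ∀ F : Set (Fin n → ℝ), IsFace K F → (∀ x ∈ F, A.mulVec x ∈ F) →
    F = ({0} : Set (Fin n → ℝ)) ∨ F = K

/-!
Let `K` have the `k + 1` extreme vectors `x i` and consider the digraph with an edge `i → j`
whenever `A *ᵥ x i` dominates `x j`. A closed walk of length `s` at `x j` makes the sequence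
`A ^ (s * q) *ᵥ x j` increasing in the order of `K` up to positive factors, so by Cayley–Hamilton it
is interior for `q = n - 1`. If `A ^ (k * (n - 1)) *ᵥ x i` is not interior, then no walk from `x i`
runs into a short circuit, which forces the digraph of Wielandt: with `z = x i`, the extreme vectors
are `z, A z, …, A ^ k z` up to scaling and `A ^ (k + 1) z = b z + c A z`, where `b, c > 0`. Hence
the exponent is at most `k * (n - 1) + 1`, which is at most `k * (k - 1)` unless `n = k`.

For `n = k` the characteristic polynomial is `(t ^ (k + 1) - c t - b) / (t - μ)`. If `k` is even,
then `μ < 0` and the coefficients of `1` and `t` are negative, so a vector that dominates the other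
generators dominates `z` and `A z` too; this saves one step.

Companion matrices with such a characteristic polynomial and `μ = -1` attain the bounds: a linear
functional that is nonnegative on the cone, positive at `z`, and zero at all but one or two of the
other generators vanishes at `A ^ t z` unless a walk of length `t` leads from `z` to a generator at
which it is positive.
-/

section ProperCones

open scoped Pointwise Topology

variable {n : ℕ} {K : Set (Fin n → ℝ)} {u w x y z : Fin n → ℝ}

namespace IsProperCone

theorem zero_mem (hK : IsProperCone K) : (0 : Fin n → ℝ) ∈ K :=
  (hK.2.2.2.1.symm.subset rfl).1

/-- A proper cone as a bundled `PointedCone`, which gives access to the library on submodules over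
the nonnegative reals. -/
def toPointedCone (hK : IsProperCone K) : PointedCone ℝ (Fin n → ℝ) where
  carrier := K
  add_mem' hx hy := hK.2.1 _ hx _ hy
  zero_mem' := hK.zero_mem
  smul_mem' c _ hx := hK.2.2.1 c c.2 _ hx

theorem add_mem (hK : IsProperCone K) (hx : x ∈ K) (hy : y ∈ K) : x + y ∈ K :=
  hK.2.1 x hx y hy

theorem smul_mem (hK : IsProperCone K) {c : ℝ} (hc : 0 ≤ c) (hx : x ∈ K) : c • x ∈ K :=
  hK.2.2.1 c hc x hx

theorem sum_mem (hK : IsProperCone K) {ι : Type*} {s : Finset ι} {f : ι → Fin n → ℝ}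
    (hf : ∀ i ∈ s, f i ∈ K) : ∑ i ∈ s, f i ∈ K :=
  Submodule.sum_mem hK.toPointedCone hf

theorem eq_zero_of_neg_mem (hK : IsProperCone K) (hx : x ∈ K) (hx' : -x ∈ K) : x = 0 :=
  hK.2.2.2.1.subset ⟨hx, hx'⟩

theorem eq_zero_of_add_eq_zero (hK : IsProperCone K) (hx : x ∈ K) (hy : y ∈ K)
    (h : x + y = 0) : x = 0 :=
  hK.eq_zero_of_neg_mem hx (neg_eq_of_add_eq_zero_right h ▸ hy)

theorem exists_neg_of_sum_smul_eq_zero (hK : IsProperCone K) {ι : Type*} [Fintype ι] {r : ι → ℝ}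
    {f : ι → Fin n → ℝ} (hf : ∀ i, f i ∈ K) (hsum : ∑ i, r i • f i = 0) {i : ι}
    (hi : r i • f i ≠ 0) : ∃ j, r j < 0 := by
  classical
  by_contra! hr
  rw [← Finset.add_sum_erase _ _ (Finset.mem_univ i)] at hsum
  exact hi (hK.eq_zero_of_add_eq_zero (hK.smul_mem (hr i) (hf i))
    (hK.sum_mem fun j _ => hK.smul_mem (hr j) (hf j)) hsum)

theorem add_mem_interior (hK : IsProperCone K) (hu : u ∈ interior K) (hx : x ∈ K) :
    u + x ∈ interior K := by
  have hKK : K + K ⊆ K := Set.add_subset_iff.2 fun _ ha _ hb => hK.add_mem ha hb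
  exact interior_mono hKK (subset_interior_add_left (Set.add_mem_add hu hx))

theorem smul_mem_interior (hK : IsProperCone K) {c : ℝ} (hc : 0 < c) (hu : u ∈ interior K) :
    c • u ∈ interior K := by
  have hcK : c • K ⊆ K := by
    rintro _ ⟨x, hx, rfl⟩
    exact hK.smul_mem hc.le hx
  exact interior_mono hcK (interior_smul₀ hc.ne' K ▸ Set.smul_mem_smul_set hu)

end IsProperCone

/-- `y` dominates `z` with respect to `K` if some positive multiple of `z` lies below `y` in the
order induced by `K`. For `y ∈ K` and `z ∈ K` this says that `z` lies in the face generated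
by `y`. -/
def Dominates (K : Set (Fin n → ℝ)) (y z : Fin n → ℝ) : Prop :=
  ∃ c : ℝ, 0 < c ∧ y - c • z ∈ K

namespace Dominates

theorem refl (hK : IsProperCone K) (y : Fin n → ℝ) : Dominates K y y :=
  ⟨1, one_pos, by simpa using hK.zero_mem⟩

theorem trans (hK : IsProperCone K) (hxy : Dominates K x y) (hyz : Dominates K y z) :
    Dominates K x z := by
  obtain ⟨c, hc, hxy⟩ := hxy
  obtain ⟨d, hd, hyz⟩ := hyz
  refine ⟨c * d, mul_pos hc hd, ?_⟩
  have : x - (c * d) • z = (x - c • y) + c • (y - d • z) := by module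
  exact this ▸ hK.add_mem hxy (hK.smul_mem hc.le hyz)

theorem of_neg_mem (hK : IsProperCone K) (hy : y ∈ K) (hz : -z ∈ K) : Dominates K y z :=
  ⟨1, one_pos, by simpa [sub_eq_add_neg] using hK.add_mem hy hz⟩

theorem add_right (hK : IsProperCone K) (hxy : Dominates K x y) (hxz : Dominates K x z) :
    Dominates K x (y + z) := by
  obtain ⟨c, hc, hxy⟩ := hxy
  obtain ⟨d, hd, hxz⟩ := hxz
  refine ⟨(c⁻¹ + d⁻¹)⁻¹, by positivity, ?_⟩
  have hmem := hK.smul_mem (c := (c⁻¹ + d⁻¹)⁻¹) (by positivity) <|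
    hK.add_mem (hK.smul_mem (inv_pos.2 hc).le hxy) (hK.smul_mem (inv_pos.2 hd).le hxz)
  convert hmem using 1
  ext i
  simp only [Pi.sub_apply, Pi.add_apply, Pi.smul_apply, smul_eq_mul]
  field_simp
  ring

theorem smul_right_of_pos (h : Dominates K y z) {a : ℝ} (ha : 0 < a) : Dominates K y (a • z) := by
  obtain ⟨c, hc, h⟩ := h
  exact ⟨c / a, div_pos hc ha, by rwa [smul_smul, div_mul_cancel₀ _ ha.ne']⟩

theorem smul_right (hK : IsProperCone K) (hy : y ∈ K) (hz : z ∈ K) (h : Dominates K y z) (a : ℝ) :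
    Dominates K y (a • z) := by
  rcases le_or_gt a 0 with ha | ha
  · refine of_neg_mem hK hy ?_
    rw [← neg_smul]
    exact hK.smul_mem (neg_nonneg.2 ha) hz
  · exact h.smul_right_of_pos ha

theorem sum (hK : IsProperCone K) {ι : Type*} {s : Finset ι} {f : ι → Fin n → ℝ} (hy : y ∈ K)
    (hf : ∀ i ∈ s, Dominates K y (f i)) : Dominates K y (∑ i ∈ s, f i) :=
  Finset.sum_induction f (Dominates K y) (fun _ _ => add_right hK)
    (of_neg_mem hK hy (by simpa using hK.zero_mem)) hf

theorem of_sum_smul_eq_zero (hK : IsProperCone K) {ι : Type*} [Fintype ι] {r : ι → ℝ}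
    {f : ι → Fin n → ℝ} (hw : w ∈ K) (hf : ∀ i, f i ∈ K) (hsum : ∑ i, r i • f i = 0)
    (hpos : ∀ i, 0 < r i → Dominates K w (f i)) {i : ι} (hi : r i < 0) : Dominates K w (f i) := by
  classical
  have hterm : ∀ j, Dominates K w (r j • f j) := fun j => by
    rcases le_or_gt (r j) 0 with hj | hj
    · exact of_neg_mem hK hw (neg_smul (r j) (f j) ▸ hK.smul_mem (neg_nonneg.2 hj) (hf j))
    · exact (hpos j hj).smul_right_of_pos hj
  have hrest : ∑ j ∈ Finset.univ.erase i, r j • f j = -r i • f i := by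
    rw [← Finset.add_sum_erase _ _ (Finset.mem_univ i)] at hsum
    rw [neg_smul, neg_eq_of_add_eq_zero_right hsum]
  have h : Dominates K w (-r i • f i) := hrest ▸ sum hK hw fun j _ => hterm j
  simpa [smul_smul, hi.ne] using h.smul_right_of_pos (inv_pos.2 (neg_pos.2 hi))

theorem mem_interior (hK : IsProperCone K) (h : Dominates K y u) (hu : u ∈ interior K) :
    y ∈ interior K := by
  obtain ⟨c, hc, h⟩ := h
  simpa using hK.add_mem_interior (hK.smul_mem_interior hc hu) h

end Dominates

theorem dominates_of_mem_interior (hu : u ∈ interior K) (z : Fin n → ℝ) : Dominates K u z := by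
  have hlim : Filter.Tendsto (fun c : ℝ => u - c • z) (𝓝[>] 0) (𝓝 u) := by
    have : Continuous fun c : ℝ => u - c • z := by fun_prop
    simpa using (this.tendsto 0).mono_left nhdsWithin_le_nhds
  have hpos : ∀ᶠ c : ℝ in 𝓝[>] 0, 0 < c := self_mem_nhdsWithin
  exact (hpos.and (hlim (mem_interior_iff_mem_nhds.1 hu))).exists

theorem IsProperCone.ne_zero_of_mem_interior [NeZero n] (hK : IsProperCone K)
    (hu : u ∈ interior K) : u ≠ 0 := by
  rintro rfl
  have hneg : ∀ z, -z ∈ K := fun z => by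
    obtain ⟨c, hc, h⟩ := dominates_of_mem_interior hu z
    simpa [hc.ne'] using hK.smul_mem (inv_pos.2 hc).le h
  have h1 : (1 : Fin n → ℝ) = 0 := hK.eq_zero_of_neg_mem (by simpa using hneg (-1)) (hneg 1)
  exact one_ne_zero (congrFun h1 0)

end ProperCones

section GeneratedCones

variable {m n : ℕ} {K : Set (Fin n → ℝ)} {w : Fin n → ℝ} {y : Fin m → Fin n → ℝ}

theorem coneGen_eq_hull (y : Fin m → Fin n → ℝ) :
    ConeGen y = (PointedCone.hull ℝ (range y) : Set (Fin n → ℝ)) := by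
  ext x
  refine Iff.trans ?_ (Submodule.mem_span_range_iff_exists_fun {c : ℝ // 0 ≤ c}).symm
  constructor
  · rintro ⟨c, hc, rfl⟩
    exact ⟨fun j => ⟨c j, hc j⟩, rfl⟩
  · rintro ⟨c, rfl⟩
    exact ⟨fun j => c j, fun j => (c j).2, rfl⟩

theorem mem_coneGen (y : Fin m → Fin n → ℝ) (i : Fin m) : y i ∈ ConeGen y := by
  rw [coneGen_eq_hull]
  exact PointedCone.subset_hull (mem_range_self i)

theorem IsProperCone.coneGen_subset (hK : IsProperCone K) (hy : ∀ i, y i ∈ K) : ConeGen y ⊆ K := by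
  rw [coneGen_eq_hull]
  exact Submodule.span_le (p := hK.toPointedCone).2 (range_subset_iff.2 hy)

theorem coneGen_subset_coneGen {l : ℕ} {x : Fin l → Fin n → ℝ} (hx : ∀ i, x i ∈ ConeGen y) :
    ConeGen x ⊆ ConeGen y := by
  simp only [coneGen_eq_hull] at hx ⊢
  exact Submodule.span_le.2 (range_subset_iff.2 hx)

theorem IsProperCone.mem_interior_of_dominates_generators (hK : IsProperCone K)
    (hKy : K = ConeGen y) (hw : w ∈ K) (h : ∀ i, Dominates K w (y i)) : w ∈ interior K := by
  obtain ⟨u, hu⟩ := hK.2.2.2.2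
  obtain ⟨c, -, rfl⟩ : u ∈ ConeGen y := hKy ▸ interior_subset hu
  have hyK : ∀ i, y i ∈ K := fun i => hKy ▸ mem_coneGen y i
  exact (Dominates.sum hK hw fun i _ => (h i).smul_right hK hw (hyK i) (c i)).mem_interior hK hu

theorem KPositive.of_generators (hK : IsProperCone K) (hKy : K = ConeGen y)
    {B : Matrix (Fin n) (Fin n) ℝ} (h : ∀ i, B *ᵥ y i ∈ interior K) : KPositive K B := by
  intro u hu hu0
  obtain ⟨c, hc, rfl⟩ : u ∈ ConeGen y := hKy ▸ hu
  obtain ⟨i, -, hi⟩ : ∃ i ∈ Finset.univ, c i • y i ≠ 0 := Finset.exists_ne_zero_of_sum_ne_zero hu0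
  have hi_pos : 0 < c i := (hc i).lt_of_ne fun h0 => hi (by rw [← h0, zero_smul])
  simp only [mulVec_sum, mulVec_smul]
  rw [← Finset.add_sum_erase _ _ (Finset.mem_univ i)]
  exact hK.add_mem_interior (hK.smul_mem_interior hi_pos (h i))
    (hK.sum_mem fun j _ => hK.smul_mem (hc j) (interior_subset (h j)))

theorem KNonneg.of_generators (hK : IsProperCone K) (hKy : K = ConeGen y)
    {B : Matrix (Fin n) (Fin n) ℝ} (h : ∀ i, B *ᵥ y i ∈ K) : KNonneg K B := by
  intro u hu
  obtain ⟨c, hc, rfl⟩ : u ∈ ConeGen y := hKy ▸ hu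
  simp only [mulVec_sum, mulVec_smul]
  exact hK.sum_mem fun j _ => hK.smul_mem (hc j) (h j)

end GeneratedCones

section Matrices

variable {n : ℕ} {K : Set (Fin n → ℝ)} {A B : Matrix (Fin n) (Fin n) ℝ} {u x y z : Fin n → ℝ}

theorem KNonneg.pow (hA : KNonneg K A) (t : ℕ) : KNonneg K (A ^ t) := by
  induction t with
  | zero => simp [KNonneg]
  | succ t ih =>
    intro x hx
    rw [pow_succ, ← mulVec_mulVec]
    exact ih _ (hA x hx)

theorem KNonneg.dominates (hA : KNonneg K A) (h : Dominates K y z) :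
    Dominates K (A *ᵥ y) (A *ᵥ z) := by
  obtain ⟨c, hc, h⟩ := h
  exact ⟨c, hc, by simpa only [mulVec_sub, mulVec_smul] using hA _ h⟩

theorem KNonneg.mulVec_mem_interior (hK : IsProperCone K) (hA : KNonneg K A)
    (hu : u ∈ interior K) (hx : A *ᵥ x ∈ interior K) : A *ᵥ u ∈ interior K :=
  (hA.dominates (dominates_of_mem_interior hu x)).mem_interior hK hx

/-- There is a walk of length `t` from `y` to `z` in the digraph of `A` with respect to `K`:
`A ^ t *ᵥ y` dominates `z`. -/
def Reaches (K : Set (Fin n → ℝ)) (A : Matrix (Fin n) (Fin n) ℝ) (t : ℕ)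
    (y z : Fin n → ℝ) : Prop :=
  Dominates K (A ^ t *ᵥ y) z

namespace Reaches

theorem refl (hK : IsProperCone K) (A : Matrix (Fin n) (Fin n) ℝ) (y : Fin n → ℝ) :
    Reaches K A 0 y y := by
  simpa [Reaches] using Dominates.refl hK y

theorem one_iff : Reaches K A 1 y z ↔ Dominates K (A *ᵥ y) z := by
  rw [Reaches, pow_one]

theorem trans (hK : IsProperCone K) (hA : KNonneg K A) {s t : ℕ} (hxy : Reaches K A s x y)
    (hyz : Reaches K A t y z) : Reaches K A (s + t) x z := by
  have h : Dominates K (A ^ t *ᵥ A ^ s *ᵥ x) (A ^ t *ᵥ y) := (hA.pow t).dominates hxy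
  rw [mulVec_mulVec, ← pow_add, add_comm] at h
  exact Dominates.trans hK h hyz

theorem iterate (hK : IsProperCone K) (hA : KNonneg K A) {s : ℕ} (h : Reaches K A s y y) (q : ℕ) :
    Reaches K A (s * q) y y := by
  induction q with
  | zero => exact refl hK A y
  | succ q ih => exact ih.trans hK hA h

theorem mem_interior (hK : IsProperCone K) (hA : KNonneg K A) {s t : ℕ} (h : Reaches K A s x y)
    (hy : A ^ t *ᵥ y ∈ interior K) : A ^ (s + t) *ᵥ x ∈ interior K := by
  rw [add_comm, pow_add, ← mulVec_mulVec]
  exact ((hA.pow t).dominates h).mem_interior hK hy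

end Reaches

theorem KPrimitive.mulVec_mem_interior [NeZero n] (hK : IsProperCone K) (hA : KPrimitive K A)
    (hu : u ∈ interior K) : A *ᵥ u ∈ interior K := by
  obtain ⟨hA, p, hp, hpos⟩ := hA
  have h := hpos u (interior_subset hu) (hK.ne_zero_of_mem_interior hu)
  obtain ⟨q, rfl⟩ := Nat.exists_eq_add_one.2 hp
  rw [pow_succ', ← mulVec_mulVec] at h
  exact hA.mulVec_mem_interior hK hu h

theorem KPrimitive.pow_mulVec_mem_interior [NeZero n] (hK : IsProperCone K) (hA : KPrimitive K A)
    (hu : u ∈ interior K) (t : ℕ) : A ^ t *ᵥ u ∈ interior K := by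
  induction t with
  | zero => simpa using hu
  | succ t ih =>
    rw [pow_succ', ← mulVec_mulVec]
    exact hA.mulVec_mem_interior hK ih

theorem KPrimitive.pow_mulVec_mem_interior_of_le [NeZero n] (hK : IsProperCone K)
    (hA : KPrimitive K A) {s t : ℕ} (hst : s ≤ t) (hx : A ^ s *ᵥ x ∈ interior K) :
    A ^ t *ᵥ x ∈ interior K := by
  obtain ⟨r, rfl⟩ := Nat.exists_eq_add_of_le' hst
  rw [pow_add, ← mulVec_mulVec]
  exact hA.pow_mulVec_mem_interior hK hx r

theorem KPrimitive.mulVec_ne_zero [NeZero n] (hK : IsProperCone K) (hA : KPrimitive K A)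
    (hx : x ∈ K) (hx0 : x ≠ 0) : A *ᵥ x ≠ 0 := by
  intro h
  obtain ⟨-, p, hp, hpos⟩ := hA
  obtain ⟨q, rfl⟩ := Nat.exists_eq_add_one.2 hp
  refine hK.ne_zero_of_mem_interior (hpos x hx hx0) ?_
  rw [pow_succ, ← mulVec_mulVec, h, mulVec_zero]

theorem KPrimitive.exists_pow_pow_mem_interior [NeZero n] (hK : IsProperCone K)
    (hA : KPrimitive K A) {s : ℕ} (hs : 0 < s) (hx : x ∈ K) (hx0 : x ≠ 0) :
    ∃ p, (A ^ s) ^ p *ᵥ x ∈ interior K := by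
  obtain ⟨p, -, hpos⟩ := hA.2
  refine ⟨p, ?_⟩
  rw [← pow_mul]
  exact hA.pow_mulVec_mem_interior_of_le hK (Nat.le_mul_of_pos_left p hs) (hpos x hx hx0)

theorem IsProperCone.mem_interior_of_pow_mulVec_mem_interior (hK : IsProperCone K) (hx : x ∈ K)
    {c : ℝ} (hBx : B *ᵥ x = c • x) {p : ℕ} (h : B ^ p *ᵥ x ∈ interior K) : x ∈ interior K := by
  have hpow : ∀ q, B ^ q *ᵥ x = c ^ q • x := fun q => by
    induction q with
    | zero => simp
    | succ q ih => rw [pow_succ, ← mulVec_mulVec, hBx, mulVec_smul, ih, smul_smul, pow_succ']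
  rw [hpow] at h
  exact ((Dominates.refl hK x).smul_right hK hx hx (c ^ p)).mem_interior hK h

theorem exists_pow_eq_sum_pow {R ι : Type*} [CommRing R] [Fintype ι] [DecidableEq ι]
    (M : Matrix ι ι R) (p : ℕ) :
    ∃ a : ℕ → R, M ^ p = ∑ j ∈ Finset.range (Fintype.card ι), a j • M ^ j := by
  nontriviality R
  cases isEmpty_or_nonempty ι
  · exact ⟨0, Subsingleton.elim _ _⟩
  have hne : M.charpoly ≠ 1 := fun h1 => by
    have := M.charpoly_natDegree_eq_dim
    rw [h1, Polynomial.natDegree_one] at this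
    exact Fintype.card_ne_zero this.symm
  refine ⟨(Polynomial.X ^ p %ₘ M.charpoly).coeff, ?_⟩
  rw [pow_eq_aeval_mod_charpoly]
  refine Polynomial.aeval_eq_sum_range' ?_ M
  exact (Polynomial.natDegree_modByMonic_lt _ M.charpoly_monic hne).trans_eq
    M.charpoly_natDegree_eq_dim

/-- The powers `B ^ j *ᵥ z`, `j < n`, are all dominated by `B ^ (n - 1) *ᵥ z`, and by
Cayley–Hamilton they span every further power. -/
theorem Dominates.pow_mulVec_mem_interior [NeZero n] (hK : IsProperCone K) (hB : KNonneg K B)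
    (hz : z ∈ K) (h : Dominates K (B *ᵥ z) z) {p : ℕ} (hp : B ^ p *ᵥ z ∈ interior K) :
    B ^ (n - 1) *ᵥ z ∈ interior K := by
  have hstep : Reaches K B 1 z z := Reaches.one_iff.2 h
  have hdom : ∀ j ∈ Finset.range n, Dominates K (B ^ (n - 1) *ᵥ z) (B ^ j *ᵥ z) := by
    intro j hj
    obtain ⟨r, hr⟩ := Nat.exists_eq_add_of_le (Nat.le_sub_one_of_lt (Finset.mem_range.1 hj))
    rw [hr, pow_add, ← mulVec_mulVec]
    simpa [Reaches] using (hB.pow j).dominates (hstep.iterate hK hB r)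
  obtain ⟨a, ha⟩ := exists_pow_eq_sum_pow B p
  rw [Fintype.card_fin] at ha
  have hsum : B ^ p *ᵥ z = ∑ j ∈ Finset.range n, a j • B ^ j *ᵥ z := by
    simp only [ha, sum_mulVec, smul_mulVec]
  have hspan := Dominates.sum hK (hB.pow (n - 1) z hz) fun j hj =>
    (hdom j hj).smul_right hK (hB.pow (n - 1) z hz) (hB.pow j z hz) (a j)
  exact (hsum ▸ hspan).mem_interior hK hp

theorem expnt_le {N : ℕ} (hN : 0 < N) (h : KPositive K (A ^ N)) : expnt K A ≤ N :=
  Nat.sInf_le ⟨hN, h⟩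

end Matrices

section Irredundance

variable {m n : ℕ} {K : Set (Fin n → ℝ)} {y : Fin m → Fin n → ℝ}

/-- A family of vectors is irredundant if none of them lies in the cone generated by the others. -/
def IsIrredundant {ι : Type*} (y : ι → Fin n → ℝ) : Prop :=
  ∀ i, y i ∉ PointedCone.hull ℝ (y '' {i}ᶜ)

/-- The ray spanned by `x`. -/
def ray (x : Fin n → ℝ) : Set (Fin n → ℝ) :=
  {y | ∃ c : ℝ, 0 ≤ c ∧ y = c • x}

theorem mem_ray_self (x : Fin n → ℝ) : x ∈ ray x :=
  ⟨1, zero_le_one, (one_smul ℝ x).symm⟩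

theorem ray_smul {c : ℝ} (hc : 0 < c) (x : Fin n → ℝ) : ray (c • x) = ray x := by
  ext y
  constructor
  · rintro ⟨d, hd, rfl⟩
    exact ⟨d * c, mul_nonneg hd hc.le, smul_smul ..⟩
  · rintro ⟨d, hd, rfl⟩
    exact ⟨d / c, div_nonneg hd hc.le, by rw [smul_smul, div_mul_cancel₀ _ hc.ne']⟩

theorem range_eq_insert_image_compl {α β : Type*} (f : α → β) (a : α) :
    range f = insert (f a) (f '' {a}ᶜ) := by
  rw [← image_insert_eq, ← image_univ, insert_eq, union_compl_self]

theorem mem_coneGen_iff_exists_smul_add (i : Fin m) {u : Fin n → ℝ} :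
    u ∈ ConeGen y ↔
      ∃ c : ℝ, 0 ≤ c ∧ ∃ v ∈ PointedCone.hull ℝ (y '' {i}ᶜ), u = c • y i + v := by
  rw [coneGen_eq_hull, range_eq_insert_image_compl y i]
  exact Submodule.mem_span_insert.trans
    ⟨fun ⟨c, h⟩ => ⟨c, c.2, h⟩, fun ⟨c, hc, h⟩ => ⟨⟨c, hc⟩, h⟩⟩

theorem hull_image_compl_subset_coneGen (i : Fin m) :
    (PointedCone.hull ℝ (y '' {i}ᶜ) : Set (Fin n → ℝ)) ⊆ ConeGen y := by
  rw [coneGen_eq_hull]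
  exact Submodule.span_mono (image_subset_range _ _)

namespace IsIrredundant

theorem ne_zero (hy : IsIrredundant y) (i : Fin m) : y i ≠ 0 :=
  fun h => hy i (h ▸ Submodule.zero_mem _)

theorem isExtremeVec (hy : IsIrredundant y) (hK : IsProperCone (ConeGen y)) (i : Fin m) :
    IsExtremeVec (ConeGen y) (y i) := by
  refine ⟨mem_coneGen y i, hy.ne_zero i, fun u hu w hw huw => ?_⟩
  obtain ⟨c, hc, u', hu', rfl⟩ := (mem_coneGen_iff_exists_smul_add i).1 hu
  obtain ⟨d, hd, w', hw', rfl⟩ := (mem_coneGen_iff_exists_smul_add i).1 hw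
  have hu'K := hull_image_compl_subset_coneGen i hu'
  have hw'K := hull_image_compl_subset_coneGen i hw'
  have hcd : 1 ≤ c + d := by
    by_contra! hlt
    refine hy i ?_
    have hyi : y i = (1 - (c + d))⁻¹ • (u' + w') := by
      rw [eq_inv_smul_iff₀ (sub_pos.2 hlt).ne']
      linear_combination (norm := module) huw
    rw [hyi]
    exact PointedCone.smul_mem _ (inv_pos.2 (sub_pos.2 hlt)).le (add_mem hu' hw')
  have hsum : (u' + w') + (c + d - 1) • y i = 0 := by linear_combination (norm := module) -huw
  have huw' : u' + w' = 0 := hK.eq_zero_of_add_eq_zero (hK.add_mem hu'K hw'K)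
    (hK.smul_mem (sub_nonneg.2 hcd) (mem_coneGen y i)) hsum
  have hu0 : u' = 0 := hK.eq_zero_of_add_eq_zero hu'K hw'K huw'
  have hw0 : w' = 0 := by simpa [hu0] using huw'
  exact ⟨⟨c, hc, by simp [hu0]⟩, ⟨d, hd, by simp [hw0]⟩⟩

end IsIrredundant

theorem IsExtremeVec.exists_eq_smul_generator (hK : IsProperCone (ConeGen y)) {x : Fin n → ℝ}
    (hx : IsExtremeVec (ConeGen y) x) : ∃ i, ∃ c : ℝ, 0 < c ∧ x = c • y i := by
  obtain ⟨⟨c, hc, hcx⟩, hx0, hext⟩ := hx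
  obtain ⟨i, -, hi⟩ : ∃ i ∈ Finset.univ, c i • y i ≠ 0 :=
    Finset.exists_ne_zero_of_sum_ne_zero (hcx ▸ hx0)
  obtain ⟨⟨a, ha, hax⟩, -⟩ := hext _ (hK.smul_mem (hc i) (mem_coneGen y i)) _
    (hK.sum_mem fun j _ => hK.smul_mem (hc j) (mem_coneGen y j))
    (hcx.trans (Finset.add_sum_erase _ _ (Finset.mem_univ i)).symm)
  have ha_pos : 0 < a := ha.lt_of_ne fun h => hi (by rw [hax, ← h, zero_smul])
  have hci_pos : 0 < c i := (hc i).lt_of_ne fun h => hi (by rw [← h, zero_smul])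
  refine ⟨i, a⁻¹ * c i, mul_pos (inv_pos.2 ha_pos) hci_pos, ?_⟩
  rw [mul_smul, hax, inv_smul_smul₀ ha_pos.ne']

namespace IsIrredundant

theorem extremeRays_coneGen (hy : IsIrredundant y) (hK : IsProperCone (ConeGen y)) :
    ExtremeRays (ConeGen y) = range fun i => ray (y i) := by
  ext R
  constructor
  · rintro ⟨x, hx, rfl⟩
    obtain ⟨i, c, hc, rfl⟩ := hx.exists_eq_smul_generator hK
    exact ⟨i, (ray_smul hc (y i)).symm⟩
  · rintro ⟨i, rfl⟩
    exact ⟨y i, hy.isExtremeVec hK i, rfl⟩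

theorem ray_injective (hy : IsIrredundant y) : Function.Injective fun i => ray (y i) := by
  intro i j hij
  by_contra hne
  obtain ⟨c, hc, hyi⟩ : y i ∈ ray (y j) := hij.subset (mem_ray_self (y i))
  refine hy i ?_
  rw [hyi]
  exact PointedCone.smul_mem _ hc (PointedCone.subset_hull (mem_image_of_mem y (Ne.symm hne)))

theorem ncard_extremeRays (hy : IsIrredundant y) (hK : IsProperCone (ConeGen y)) :
    (ExtremeRays (ConeGen y)).ncard = m := by
  rw [hy.extremeRays_coneGen hK, ← image_univ, ncard_image_of_injective _ hy.ray_injective,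
    ncard_univ, Nat.card_eq_fintype_card, Fintype.card_fin]

theorem memP (hy : IsIrredundant y) (hK : IsProperCone (ConeGen y)) : MemP m (ConeGen y) :=
  ⟨⟨hK, m, y, rfl⟩, hy.ncard_extremeRays hK⟩

theorem of_separating (h : ∀ i, ∃ f : (Fin n → ℝ) →ₗ[ℝ] ℝ, f (y i) < 0 ∧ ∀ j ≠ i, 0 ≤ f (y j)) :
    IsIrredundant y := by
  intro i hi
  obtain ⟨f, hneg, hnonneg⟩ := h i
  have hle : PointedCone.hull ℝ (y '' {i}ᶜ) ≤ (PointedCone.positive ℝ ℝ).comap f :=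
    Submodule.span_le.2 (image_subset_iff.2 fun j hj => hnonneg j hj)
  exact (hle hi).not_gt hneg

end IsIrredundant

theorem IsPolyhedralCone.exists_irredundant (hK : IsPolyhedralCone K) :
    ∃ (m : ℕ) (y : Fin m → Fin n → ℝ), K = ConeGen y ∧ IsIrredundant y := by
  classical
  obtain ⟨-, hgen⟩ := hK
  obtain ⟨y, hy⟩ := Nat.find_spec hgen
  refine ⟨Nat.find hgen, y, hy, fun i hi => ?_⟩
  obtain ⟨l, hl⟩ : ∃ l, Nat.find hgen = l + 1 := Nat.exists_eq_add_one.2 i.pos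
  have hmin := Nat.find_min hgen (m := l) (by lia)
  generalize Nat.find hgen = m at y i hl
  subst hl
  refine hmin ⟨y ∘ i.succAbove, hy.trans ?_⟩
  rw [coneGen_eq_hull, coneGen_eq_hull, range_comp, Fin.range_succAbove,
    range_eq_insert_image_compl y i]
  exact congrArg _ (Submodule.span_insert_eq_span hi)

theorem MemP.exists_irredundant (h : MemP m K) :
    ∃ y : Fin m → Fin n → ℝ, K = ConeGen y ∧ IsIrredundant y := by
  obtain ⟨hK, rfl⟩ := h
  obtain ⟨l, y, rfl, hy⟩ := hK.exists_irredundant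
  rw [hy.ncard_extremeRays hK.1]
  exact ⟨y, rfl, hy⟩

end Irredundance

section Lassos

variable {V : Type*} {W : ℕ → V → V → Prop} {k : ℕ} {u : V} {v : ℕ → V}

/-- `W t u v` behaves like the relation "there is a walk of length `t` from `u` to `v`" in a
digraph all of whose vertices have a successor. Walks need not decompose into edges. -/
structure IsWalkRel (W : ℕ → V → V → Prop) : Prop where
  refl : ∀ u, W 0 u u
  trans : ∀ {s t u v w}, W s u v → W t v w → W (s + t) u w
  exists_succ : ∀ u, ∃ v, W 1 u v

/-- A lasso is a walk of length `p` followed by a closed walk of length `s`. The predicate says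
that lassos from `u` have total length at least `k + 1`, and that those of length `k + 1` have a
tail of length `p ≤ 1`. -/
def OnlyLongLassos (W : ℕ → V → V → Prop) (k : ℕ) (u : V) : Prop :=
  ∀ p s w, 0 < s → p + s ≤ k + 1 → W p u w → W s w w → p + s = k + 1 ∧ p ≤ 1

/-- An infinite path whose initial vertex has only long lassos. In the Wielandt digraph on `k + 1`
vertices this is the path that runs around the Hamiltonian circuit. -/
structure IsWielandtPath (W : ℕ → V → V → Prop) (k : ℕ) (v : ℕ → V) : Prop where
  isWalkRel : IsWalkRel W
  step : ∀ t, W 1 (v t) (v (t + 1))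
  onlyLongLassos : OnlyLongLassos W k (v 0)

theorem IsWalkRel.exists_isWielandtPath (hW : IsWalkRel W) (hu : OnlyLongLassos W k u) :
    ∃ v, v 0 = u ∧ IsWielandtPath W k v := by
  choose f hf using hW.exists_succ
  exact ⟨fun t => f^[t] u, rfl, hW, fun t => Function.iterate_succ_apply' f t u ▸ hf _, hu⟩

namespace IsWielandtPath

variable {a b d s : ℕ}

theorem walk (h : IsWielandtPath W k v) (a t : ℕ) : W t (v a) (v (a + t)) := by
  induction t with
  | zero => exact h.isWalkRel.refl _
  | succ t ih => exact h.isWalkRel.trans ih (h.step _)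

theorem walk_of_le (h : IsWielandtPath W k v) (hab : a ≤ b) : W (b - a) (v a) (v b) := by
  simpa [Nat.add_sub_cancel' hab] using h.walk a (b - a)

theorem of_return (h : IsWielandtPath W k v) (hab : a ≤ b) (hs : 0 < s) (hbs : b + s ≤ k + 1)
    (hret : W s (v b) (v a)) : b + s = k + 1 ∧ a ≤ 1 := by
  have hclosed := h.isWalkRel.trans (h.walk_of_le hab) hret
  have := h.onlyLongLassos a (b - a + s) (v a) (by lia) (by lia)
    (h.walk_of_le a.zero_le) hclosed
  lia

theorem injective (h : IsWielandtPath W k v) : Function.Injective fun a : Fin (k + 1) => v a := by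
  refine Function.Injective.of_lt_imp_ne fun a b hab heq => ?_
  have hclosed : W (b - a) (v a) (v a) := by simpa [heq] using h.walk_of_le hab.le
  have := h.onlyLongLassos a (b - a) (v a) (by lia) (by lia) (h.walk_of_le (Nat.zero_le a)) hclosed
  lia

theorem surjective {v : ℕ → Fin (k + 1)} {W : ℕ → Fin (k + 1) → Fin (k + 1) → Prop}
    (h : IsWielandtPath W k v) : Function.Surjective fun a : Fin (k + 1) => v a :=
  Finite.injective_iff_surjective.1 h.injective

theorem le_one_of_last_edge (h : IsWielandtPath W k v) (hd : d ≤ k) (hkd : W 1 (v k) (v d)) :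
    d ≤ 1 :=
  (h.of_return hd one_pos le_rfl hkd).2

/-- A longer jump would be a shortcut on the closed walk through `v d` and `v k`. -/
theorem eq_succ_of_edge (h : IsWielandtPath W k v) (hkd : W 1 (v k) (v d)) (hda : d ≤ a)
    (hak : a < k) (hb : b ≤ k) (hab : W 1 (v a) (v b)) : b = a + 1 := by
  by_contra hne
  rcases le_or_gt b a with hba | hba
  · have := h.of_return hba one_pos (by lia) hab
    lia
  · have hret := h.isWalkRel.trans (h.isWalkRel.trans hab (h.walk_of_le hb)) hkd
    have := h.of_return hda (by lia) (by lia) hret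
    lia

end IsWielandtPath

theorem add_eq_succ_of_mul_lt {d k p s : ℕ} (hd : 2 ≤ d) (hps : p + s ≤ k + 1)
    (h : k * d < p + s * d) : p + s = k + 1 ∧ p ≤ 1 := by
  have hks : k ≤ s := by
    by_contra! hlt
    obtain ⟨e, rfl⟩ := Nat.exists_eq_add_of_lt hlt
    nlinarith
  rcases hks.eq_or_lt with rfl | hlt <;> lia

end Lassos

section WielandtGenerators

variable {k m n : ℕ} {K : Set (Fin n → ℝ)} {A : Matrix (Fin n) (Fin n) ℝ} {w z : Fin n → ℝ}
  {b c : ℝ}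

theorem IsProperCone.exists_eq_sum_dominated (hK : IsProperCone K) {x : Fin m → Fin n → ℝ}
    (hKx : K = ConeGen x) (hw : w ∈ K) {S : Finset (Fin m)}
    (hS : ∀ l, Dominates K w (x l) → l ∈ S) :
    ∃ c : Fin m → ℝ, (∀ l, 0 ≤ c l) ∧ (∀ l, c l ≠ 0 → Dominates K w (x l)) ∧
      w = ∑ l ∈ S, c l • x l := by
  obtain ⟨c, hc, rfl⟩ : w ∈ ConeGen x := hKx ▸ hw
  have hdom : ∀ l, c l ≠ 0 → Dominates K (∑ j, c j • x j) (x l) := fun l hl => by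
    refine ⟨c l, (hc l).lt_of_ne hl.symm, ?_⟩
    rw [← Finset.add_sum_erase _ _ (Finset.mem_univ l), add_sub_cancel_left]
    exact hK.sum_mem fun j _ => hK.smul_mem (hc j) (hKx ▸ mem_coneGen x j)
  refine ⟨c, hc, hdom, (Finset.sum_subset S.subset_univ fun l _ hl => ?_).symm⟩
  rw [not_imp_comm.1 (fun h => hS l (hdom l h)) hl, zero_smul]

theorem IsProperCone.exists_dominated_generator (hK : IsProperCone K) {x : Fin m → Fin n → ℝ}
    (hKx : K = ConeGen x) (hw : w ∈ K) (hw0 : w ≠ 0) : ∃ l, Dominates K w (x l) := by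
  by_contra! hnone
  obtain ⟨c, -, -, hsum⟩ := hK.exists_eq_sum_dominated hKx hw (S := ∅) fun l hl => (hnone l hl).elim
  exact hw0 (by simpa using hsum)

theorem IsProperCone.exists_eq_smul_of_dominated_unique (hK : IsProperCone K)
    {x : Fin m → Fin n → ℝ} (hKx : K = ConeGen x) (hw : w ∈ K) (hw0 : w ≠ 0) {l₀ : Fin m}
    (huniq : ∀ l, Dominates K w (x l) → l = l₀) : ∃ c : ℝ, 0 < c ∧ w = c • x l₀ := by
  obtain ⟨c, hc, -, hsum⟩ := hK.exists_eq_sum_dominated hKx hw (S := {l₀})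
    fun l hl => Finset.mem_singleton.2 (huniq l hl)
  rw [Finset.sum_singleton] at hsum
  exact ⟨c l₀, (hc l₀).lt_of_ne fun h => hw0 (by rw [hsum, ← h, zero_smul]), hsum⟩

theorem exists_pow_mulVec_eq_smul {y : ℕ → Fin n → ℝ} {r t : ℕ}
    (hstep : ∀ a, r ≤ a → a < r + t → ∃ c : ℝ, 0 < c ∧ A *ᵥ y a = c • y (a + 1)) :
    ∃ c : ℝ, 0 < c ∧ A ^ t *ᵥ y r = c • y (r + t) := by
  induction t with
  | zero => exact ⟨1, one_pos, by simp⟩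
  | succ t ih =>
    obtain ⟨c, hc, hpow⟩ := ih fun a ha hat => hstep a ha (by lia)
    obtain ⟨d, hd, hlast⟩ := hstep (r + t) (by lia) (by lia)
    refine ⟨c * d, mul_pos hc hd, ?_⟩
    rw [pow_succ', ← mulVec_mulVec, hpow, mulVec_smul, hlast, smul_smul, add_assoc]

theorem KPrimitive.mem_interior_of_cycle [NeZero n] (hK : IsProperCone K) (hA : KPrimitive K A)
    {y : ℕ → Fin n → ℝ} {r t : ℕ} (hy : y r ∈ K) (hy0 : y r ≠ 0)
    (hstep : ∀ a, r ≤ a → a < r + t → ∃ c : ℝ, 0 < c ∧ A *ᵥ y a = c • y (a + 1))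
    (hclose : A *ᵥ y (r + t) = c • y r) : y r ∈ interior K := by
  obtain ⟨d, -, hpow⟩ := exists_pow_mulVec_eq_smul hstep
  have heigen : A ^ (t + 1) *ᵥ y r = (d * c) • y r := by
    rw [pow_succ', ← mulVec_mulVec, hpow, mulVec_smul, hclose, smul_smul]
  obtain ⟨p, hp⟩ := hA.exists_pow_pow_mem_interior hK t.succ_pos hy hy0
  exact hK.mem_interior_of_pow_mulVec_mem_interior hy heigen hp

/-- The matrix `A` acts on the generators `z, A z, …, A ^ k z` of `K` as in the Wielandt digraph:
a path, closed up by edges from the last vertex to the first two. -/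
structure IsWielandtGenerator (K : Set (Fin n → ℝ)) (A : Matrix (Fin n) (Fin n) ℝ) (k : ℕ)
    (z : Fin n → ℝ) (b c : ℝ) : Prop where
  b_pos : 0 < b
  c_pos : 0 < c
  pow_succ_mulVec : A ^ (k + 1) *ᵥ z = b • z + c • A *ᵥ z
  eq_coneGen : K = ConeGen fun a : Fin (k + 1) => A ^ (a : ℕ) *ᵥ z

section SlowGenerator

variable {x : Fin (k + 1) → Fin n → ℝ} {i : Fin (k + 1)} {v : ℕ → Fin (k + 1)}

theorem KPrimitive.isWalkRel_reaches [NeZero n] (hK : IsProperCone K) (hA : KPrimitive K A)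
    (hKx : K = ConeGen x) (hx0 : ∀ j, x j ≠ 0) :
    IsWalkRel fun t j l => Reaches K A t (x j) (x l) where
  refl j := Reaches.refl hK A (x j)
  trans h h' := Reaches.trans hK hA.1 h h'
  exists_succ j := by
    have hxj : x j ∈ K := hKx ▸ mem_coneGen x j
    obtain ⟨l, hl⟩ := hK.exists_dominated_generator hKx (hA.1 _ hxj)
      (hA.mulVec_ne_zero hK hxj (hx0 j))
    exact ⟨l, Reaches.one_iff.2 hl⟩

theorem KPrimitive.onlyLongLassos_reaches (hn : 3 ≤ n) (hK : IsProperCone K) (hA : KPrimitive K A)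
    (hKx : K = ConeGen x) (hx0 : ∀ j, x j ≠ 0) (hi : A ^ (k * (n - 1)) *ᵥ x i ∉ interior K) :
    OnlyLongLassos (fun t j l => Reaches K A t (x j) (x l)) k i := by
  have : NeZero n := ⟨by lia⟩
  intro p s j hs hps htail hcycle
  have hxj : x j ∈ K := hKx ▸ mem_coneGen x j
  refine add_eq_succ_of_mul_lt (d := n - 1) (by lia) hps ?_
  by_contra! hle
  obtain ⟨q, hq⟩ := hA.exists_pow_pow_mem_interior hK hs hxj (hx0 j)
  have hj : A ^ (s * (n - 1)) *ᵥ x j ∈ interior K :=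
    pow_mul A s (n - 1) ▸ Dominates.pow_mulVec_mem_interior hK (hA.1.pow s) hxj hcycle hq
  exact hi (hA.pow_mulVec_mem_interior_of_le hK hle (htail.mem_interior hK hA.1 hj))

theorem IsWielandtPath.exists_mulVec_eq_smul [NeZero n] (hK : IsProperCone K) (hA : KPrimitive K A)
    (hKx : K = ConeGen x) (hx0 : ∀ j, x j ≠ 0)
    (hv : IsWielandtPath (fun t j l => Reaches K A t (x j) (x l)) k v) {a d : ℕ}
    (hkd : Reaches K A 1 (x (v k)) (x (v d))) (hda : d ≤ a) (hak : a < k) :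
    ∃ c : ℝ, 0 < c ∧ A *ᵥ x (v a) = c • x (v (a + 1)) := by
  have hxa : x (v a) ∈ K := hKx ▸ mem_coneGen x _
  refine hK.exists_eq_smul_of_dominated_unique hKx (hA.1 _ hxa)
    (hA.mulVec_ne_zero hK hxa (hx0 _)) fun l hl => ?_
  obtain ⟨e, rfl⟩ := hv.surjective l
  exact congrArg v (hv.eq_succ_of_edge hkd hda hak e.is_le (Reaches.one_iff.2 hl))

theorem IsWielandtPath.exists_mulVec_last (hK : IsProperCone K) (hA : KNonneg K A)
    (hKx : K = ConeGen x) (hk : 0 < k)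
    (hv : IsWielandtPath (fun t j l => Reaches K A t (x j) (x l)) k v) :
    ∃ b c : ℝ, 0 ≤ b ∧ 0 ≤ c ∧ (b ≠ 0 → Reaches K A 1 (x (v k)) (x (v 0))) ∧
      A *ᵥ x (v k) = b • x (v 0) + c • x (v 1) := by
  have hne : v 0 ≠ v 1 := fun h => by
    have := hv.injective.ne (a₁ := ⟨0, by lia⟩) (a₂ := ⟨1, by lia⟩) (by simp)
    exact this h
  obtain ⟨c, hc, hdom, hsum⟩ := hK.exists_eq_sum_dominated hKx
    (hA _ (hKx ▸ mem_coneGen x (v k))) (S := {v 0, v 1}) fun l hl => by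
      obtain ⟨d, rfl⟩ := hv.surjective l
      have hd := hv.le_one_of_last_edge d.is_le (Reaches.one_iff.2 hl)
      rcases Nat.le_one_iff_eq_zero_or_eq_one.1 hd with h | h <;> simp [h]
  rw [Finset.sum_pair hne] at hsum
  exact ⟨c (v 0), c (v 1), hc _, hc _, fun h => Reaches.one_iff.2 (hdom _ h), hsum⟩

theorem isWielandtGenerator_of_chain (hK : IsProperCone K) (hA : KNonneg K A)
    (hKx : K = ConeGen x) (hv : Function.Surjective fun a : Fin (k + 1) => v a)
    (hstep : ∀ a < k, ∃ e : ℝ, 0 < e ∧ A *ᵥ x (v a) = e • x (v (a + 1)))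
    (hb : 0 < b) (hc : 0 < c) (hlast : A *ᵥ x (v k) = b • x (v 0) + c • A *ᵥ x (v 0)) :
    ∃ b c, IsWielandtGenerator K A k (x (v 0)) b c := by
  have hpow : ∀ t ≤ k, ∃ e : ℝ, 0 < e ∧ A ^ t *ᵥ x (v 0) = e • x (v t) := fun t ht => by
    simpa using exists_pow_mulVec_eq_smul (y := fun a => x (v a)) (r := 0) (t := t)
      fun a _ hat => hstep a (by lia)
  obtain ⟨e, he, hk⟩ := hpow k le_rfl
  refine ⟨e * b, e * c, mul_pos he hb, mul_pos he hc, ?_, Subset.antisymm ?_ ?_⟩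
  · rw [pow_succ', ← mulVec_mulVec, hk, mulVec_smul, hlast, smul_add, smul_smul, smul_smul]
  · rw [hKx]
    refine coneGen_subset_coneGen fun l => ?_
    obtain ⟨a, rfl⟩ := hv l
    obtain ⟨d, hd, ha⟩ := hpow a a.is_le
    have hxa : x (v a) = d⁻¹ • A ^ (a : ℕ) *ᵥ x (v 0) := by rw [ha, inv_smul_smul₀ hd.ne']
    simp only [hxa]
    rw [coneGen_eq_hull]
    exact PointedCone.smul_mem _ (inv_pos.2 hd).le (PointedCone.subset_hull (mem_range_self a))
  · exact hK.coneGen_subset fun a => hA.pow a _ (hKx ▸ mem_coneGen x (v 0))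

/-- The digraph of `A` is forced by the absence of short lassos. Without one of the two closing
edges a generator would be an eigenvector of a power of `A`, hence interior. -/
theorem KPrimitive.exists_isWielandtGenerator (hn : 3 ≤ n) (hk : 0 < k) (hK : IsProperCone K)
    (hA : KPrimitive K A) (hKx : K = ConeGen x) (hx0 : ∀ j, x j ≠ 0)
    (hi : A ^ (k * (n - 1)) *ᵥ x i ∉ interior K) :
    ∃ b c, IsWielandtGenerator K A k (x i) b c := by
  have : NeZero n := ⟨by lia⟩
  have hxK : ∀ j, x j ∈ K := fun j => hKx ▸ mem_coneGen x j
  obtain ⟨v, rfl, hv⟩ := (hA.isWalkRel_reaches hK hKx hx0).exists_isWielandtPath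
    (hA.onlyLongLassos_reaches hn hK hKx hx0 hi)
  have hslow : ∀ N ≤ k * (n - 1), A ^ N *ᵥ x (v 0) ∉ interior K :=
    fun N hN hint => hi (hA.pow_mulVec_mem_interior_of_le hK hN hint)
  obtain ⟨b, c, hb, hc, hb_edge, hlast⟩ := hv.exists_mulVec_last hK hA.1 hKx hk
  have hmid : ∀ a, 1 ≤ a → a < k → ∃ e : ℝ, 0 < e ∧ A *ᵥ x (v a) = e • x (v (a + 1)) := by
    obtain ⟨l, hl⟩ := hv.isWalkRel.exists_succ (v k)
    obtain ⟨d, rfl⟩ := hv.surjective l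
    intro a ha hak
    exact hv.exists_mulVec_eq_smul hK hA hKx hx0 hl
      ((hv.le_one_of_last_edge d.is_le hl).trans ha) hak
  have hb0 : b ≠ 0 := by
    rintro rfl
    have hint : x (v 1) ∈ interior K := hA.mem_interior_of_cycle hK (y := fun a => x (v a))
      (t := k - 1) (hxK _) (hx0 _) (fun a ha hak => hmid a ha (by lia))
      (by simpa [Nat.add_sub_cancel' hk] using hlast)
    exact hslow 1 (Nat.mul_pos hk (by lia)) (Dominates.mem_interior hK (hv.step 0) hint)
  have hstep : ∀ a < k, ∃ e : ℝ, 0 < e ∧ A *ᵥ x (v a) = e • x (v (a + 1)) := fun a hak =>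
    hv.exists_mulVec_eq_smul hK hA hKx hx0 (hb_edge hb0) a.zero_le hak
  have hc0 : c ≠ 0 := by
    rintro rfl
    refine hslow 0 (Nat.zero_le _) ?_
    simpa using hA.mem_interior_of_cycle hK (y := fun a => x (v a)) (t := k) (hxK _) (hx0 _)
      (fun a _ hak => hstep a (by lia)) (by simpa using hlast)
  obtain ⟨g, hg, hfirst⟩ := hstep 0 hk
  refine isWielandtGenerator_of_chain hK hA.1 hKx hv.surjective hstep (hb.lt_of_ne' hb0)
    (div_pos (hc.lt_of_ne' hc0) hg) ?_
  rw [hlast, hfirst, smul_smul, div_mul_cancel₀ _ hg.ne', zero_add]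

end SlowGenerator

namespace IsWielandtGenerator

theorem mem (h : IsWielandtGenerator K A k z b c) : z ∈ K := by
  have hmem : A ^ ((0 : Fin (k + 1)) : ℕ) *ᵥ z ∈ K :=
    h.eq_coneGen ▸ mem_coneGen (fun a : Fin (k + 1) => A ^ (a : ℕ) *ᵥ z) 0
  simpa using hmem

theorem ne_zero [NeZero n] (hK : IsProperCone K) (h : IsWielandtGenerator K A k z b c) :
    z ≠ 0 := by
  rintro rfl
  obtain ⟨u, hu⟩ := hK.2.2.2.2
  obtain ⟨d, -, hd⟩ := h.eq_coneGen.subset (interior_subset hu)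
  exact hK.ne_zero_of_mem_interior hu (by simpa using hd)

theorem kNonneg (hK : IsProperCone K) (hk : 0 < k) (h : IsWielandtGenerator K A k z b c) :
    KNonneg K A := by
  have hmem : ∀ a ≤ k, A ^ a *ᵥ z ∈ K := fun a ha =>
    h.eq_coneGen ▸ mem_coneGen (fun a : Fin (k + 1) => A ^ (a : ℕ) *ᵥ z) ⟨a, by lia⟩
  refine KNonneg.of_generators hK h.eq_coneGen fun a => ?_
  rw [mulVec_mulVec, ← pow_succ']
  rcases a.is_le.lt_or_eq with ha | ha
  · exact hmem _ ha
  · rw [ha, h.pow_succ_mulVec]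
    exact hK.add_mem (hK.smul_mem h.b_pos.le h.mem)
      (hK.smul_mem h.c_pos.le (by simpa using hmem 1 hk))

theorem reaches_self (hK : IsProperCone K) (hA : KNonneg K A)
    (h : IsWielandtGenerator K A k z b c) : Reaches K A (k + 1) z z := by
  refine ⟨b, h.b_pos, ?_⟩
  rw [h.pow_succ_mulVec, add_sub_cancel_left]
  exact hK.smul_mem h.c_pos.le (hA z h.mem)

theorem reaches_mulVec (hK : IsProperCone K) (h : IsWielandtGenerator K A k z b c) :
    Reaches K A k (A *ᵥ z) (A *ᵥ z) := by
  refine ⟨c, h.c_pos, ?_⟩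
  rw [mulVec_mulVec, ← pow_succ, h.pow_succ_mulVec, add_sub_cancel_right]
  exact hK.smul_mem h.b_pos.le h.mem

/-- The walk goes `p` times around the circuit of length `k + 1` and `q` times around that of
length `k`. -/
theorem reaches_pow_mulVec (hK : IsProperCone K) (hA : KNonneg K A)
    (h : IsWielandtGenerator K A k z b c) (p q j : ℕ) :
    Reaches K A ((k + 1) * p + 1 + k * q + j) z (A ^ (j + 1) *ᵥ z) := by
  have hfirst : Reaches K A 1 z (A *ᵥ z) := Reaches.one_iff.2 (Dominates.refl hK _)
  have hlast : Reaches K A j (A *ᵥ z) (A ^ (j + 1) *ᵥ z) := by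
    rw [pow_succ, ← mulVec_mulVec]
    exact Dominates.refl hK _
  exact ((((h.reaches_self hK hA).iterate hK hA p).trans hK hA hfirst).trans hK hA
    ((h.reaches_mulVec hK).iterate hK hA q)).trans hK hA hlast

theorem kPrimitive (hK : IsProperCone K) (hk : 0 < k) (h : IsWielandtGenerator K A k z b c) :
    KPrimitive K A := by
  have hA := h.kNonneg hK hk
  set N := k * k + k + 1
  have hreach : ∀ j ≤ k, Reaches K A N z (A ^ (j + 1) *ᵥ z) := fun j hj => by
    obtain ⟨p, hp⟩ := Nat.exists_eq_add_of_le hj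
    convert h.reaches_pow_mulVec hK hA p j j using 1
    simp only [N, hp]
    ring
  have hint : A ^ N *ᵥ z ∈ interior K := by
    refine hK.mem_interior_of_dominates_generators h.eq_coneGen (hA.pow N z h.mem) fun a => ?_
    rcases Nat.eq_zero_or_eq_succ_pred (a : ℕ) with ha | ha
    · simpa [ha] using Dominates.trans hK (hreach k le_rfl) (h.reaches_self hK hA)
    · rw [ha]
      exact hreach _ (by lia)
  refine ⟨hA, N, Nat.succ_pos _, KPositive.of_generators hK h.eq_coneGen fun a => ?_⟩
  have haN : (a : ℕ) ≤ N := by have := a.is_le; lia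
  rw [mulVec_mulVec, ← pow_add, add_comm, pow_add, ← mulVec_mulVec]
  refine (hA.pow a).mulVec_mem_interior hK hint (x := A ^ (N - a) *ᵥ z) ?_
  rwa [mulVec_mulVec, ← pow_add, Nat.add_sub_cancel' haN]

theorem pow_mulVec_mem_interior [NeZero n] (hK : IsProperCone K) (hA : KPrimitive K A)
    (hk : 0 < k) (h : IsWielandtGenerator K A k z b c) :
    A ^ (k * (n - 1) + 1) *ᵥ z ∈ interior K := by
  have hz := hA.1 z h.mem
  obtain ⟨p, hp⟩ := hA.exists_pow_pow_mem_interior hK hk hz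
    (hA.mulVec_ne_zero hK h.mem (h.ne_zero hK))
  have hint := Dominates.pow_mulVec_mem_interior hK (hA.1.pow k) hz (h.reaches_mulVec hK) hp
  rwa [← pow_mul, mulVec_mulVec, ← pow_succ] at hint

end IsWielandtGenerator

end WielandtGenerators

section EvenDimension

open Polynomial

theorem coeff_of_mul_X_sub_C_eq {R : Type*} [CommRing R] {p : R[X]} {n : ℕ} {μ b c : R}
    (h : p * (X - C μ) = X ^ (n + 1) - (C c * X + C b)) (hp : p.coeff n = 1) {j : ℕ}
    (hj : 0 < j) (hjn : j ≤ n) : p.coeff j = μ ^ (n - j) := by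
  induction hjn using Nat.decreasingInduction with
  | self => simpa using hp
  | of_succ j hlt ih =>
    have hcoeff := congrArg (fun q => q.coeff (j + 1)) h
    simp only [coeff_mul_X_sub_C, coeff_sub, coeff_X_pow, coeff_add, coeff_C_mul, coeff_X,
      coeff_C] at hcoeff
    rw [if_neg (by lia), if_neg (by lia), if_neg (by lia), ih (by lia)] at hcoeff
    rw [show n - j = n - (j + 1) + 1 by lia, pow_succ]
    linear_combination hcoeff

theorem coeff_zero_mul_of_mul_X_sub_C_eq {R : Type*} [CommRing R] {p : R[X]} {n : ℕ} {μ b c : R}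
    (h : p * (X - C μ) = X ^ (n + 1) - (C c * X + C b)) : p.coeff 0 * μ = b := by
  simpa [mul_coeff_zero] using congrArg (fun q => q.coeff 0) h

variable {n : ℕ} {K : Set (Fin n → ℝ)} {A : Matrix (Fin n) (Fin n) ℝ} {z : Fin n → ℝ} {b c : ℝ}

theorem aeval_mulVec_eq_sum {p : ℝ[X]} {k : ℕ} (hp : p.natDegree < k)
    (M : Matrix (Fin n) (Fin n) ℝ) (z : Fin n → ℝ) :
    aeval M p *ᵥ z = ∑ j : Fin k, p.coeff j • M ^ (j : ℕ) *ᵥ z := by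
  rw [aeval_eq_sum_range' hp, Finset.sum_range, sum_mulVec]
  simp only [smul_mulVec]

theorem isMonicOfDegree_charpoly (M : Matrix (Fin n) (Fin n) ℝ) : IsMonicOfDegree M.charpoly n :=
  ⟨by simp [charpoly_natDegree_eq_dim], M.charpoly_monic⟩

theorem sum_charpoly_coeff_smul_eq_zero (M : Matrix (Fin n) (Fin n) ℝ) (z : Fin n → ℝ) :
    ∑ j : Fin (n + 1), M.charpoly.coeff j • M ^ (j : ℕ) *ᵥ z = 0 := by
  rw [← aeval_mulVec_eq_sum (by simp [(isMonicOfDegree_charpoly M).natDegree_eq]),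
    aeval_self_charpoly, zero_mulVec]

theorem charpoly_dvd_of_aeval_mulVec_eq_zero {M : Matrix (Fin n) (Fin n) ℝ}
    (hM : LinearIndependent ℝ fun j : Fin n => M ^ (j : ℕ) *ᵥ z) {p : ℝ[X]}
    (hp : aeval M p *ᵥ z = 0) : M.charpoly ∣ p := by
  rw [← modByMonic_eq_zero_iff_dvd M.charpoly_monic]
  have hdeg : (p %ₘ M.charpoly).degree < n :=
    (degree_modByMonic_lt p M.charpoly_monic).trans_eq (by simp [charpoly_degree_eq_dim])
  by_contra hne
  rw [aeval_eq_aeval_mod_charpoly,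
    aeval_mulVec_eq_sum ((natDegree_lt_iff_degree_lt hne).2 hdeg)] at hp
  refine hne (ext fun j => ?_)
  rcases lt_or_ge j n with hj | hj
  · simpa using Fintype.linearIndependent_iff.1 hM _ hp ⟨j, hj⟩
  · simpa using coeff_eq_zero_of_degree_lt (hdeg.trans_le (by exact_mod_cast hj))

namespace IsWielandtGenerator

theorem linearIndependent {k : ℕ} (hK : IsProperCone K) (h : IsWielandtGenerator K A k z b c) :
    LinearIndependent ℝ fun j : Fin n => A ^ (j : ℕ) *ᵥ z := by
  refine linearIndependent_of_top_le_span_of_card_eq_finrank ?_ (by simp)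
  set W := Submodule.span ℝ (range fun j : Fin n => A ^ (j : ℕ) *ᵥ z)
  have hpow : ∀ p, A ^ p *ᵥ z ∈ W := fun p => by
    obtain ⟨a, ha⟩ := exists_pow_eq_sum_pow A p
    rw [ha, Fintype.card_fin, Finset.sum_range, sum_mulVec]
    refine W.sum_mem fun j _ => ?_
    rw [smul_mulVec]
    exact W.smul_mem _ (Submodule.subset_span (mem_range_self j))
  have hKW : K ⊆ W := by
    rw [h.eq_coneGen]
    rintro _ ⟨d, -, rfl⟩
    exact W.sum_mem fun j _ => W.smul_mem _ (hpow j)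
  exact (Submodule.eq_top_of_nonempty_interior' W (hK.2.2.2.2.mono (interior_mono hKW))).ge

theorem exists_charpoly_mul_X_sub_C (hK : IsProperCone K) (hn : 0 < n)
    (h : IsWielandtGenerator K A n z b c) :
    ∃ μ, A.charpoly * (X - C μ) = X ^ (n + 1) - (C c * X + C b) := by
  have hroot : aeval A (X ^ (n + 1) + -(C c * X + C b)) *ᵥ z = 0 := by
    have hpow := h.pow_succ_mulVec
    simp only [neg_add_rev, map_add, map_pow, aeval_X, aeval_neg, aeval_C,
      Algebra.algebraMap_eq_smul_one, map_mul, Algebra.smul_mul_assoc, one_mul, add_mulVec, hpow,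
      neg_mulVec, smul_mulVec, one_mulVec]
    abel
  have hdeg : (-(C c * X + C b)).natDegree < n + 1 := by
    rw [natDegree_neg]
    exact natDegree_linear_le.trans_lt (by lia)
  obtain ⟨q, hq, hqX⟩ := IsMonicOfDegree.of_dvd_add (Nat.le_add_right n 1)
    (isMonicOfDegree_X_pow ℝ (n + 1)) (isMonicOfDegree_charpoly A) hdeg
    (charpoly_dvd_of_aeval_mulVec_eq_zero (h.linearIndependent hK) hroot)
  rw [Nat.add_sub_cancel_left] at hq
  obtain ⟨r, rfl⟩ := isMonicOfDegree_one_iff.1 hq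
  refine ⟨-r, ?_⟩
  rw [hqX, C_neg]
  ring

theorem charpoly_coeff_neg [NeZero n] (hK : IsProperCone K) (hA : KNonneg K A) (hn : Even n)
    (h : IsWielandtGenerator K A n z b c) {j : ℕ} (hj : j ≤ 1) : A.charpoly.coeff j < 0 := by
  have hn0 : 0 < n := Nat.pos_of_neZero n
  obtain ⟨μ, hμ⟩ := h.exists_charpoly_mul_X_sub_C hK hn0
  have hlead : A.charpoly.coeff n = 1 :=
    ((isMonicOfDegree_iff _ n).1 (isMonicOfDegree_charpoly A)).2
  have hcoeff : ∀ i, 0 < i → i ≤ n → A.charpoly.coeff i = μ ^ (n - i) :=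
    fun i hi hin => coeff_of_mul_X_sub_C_eq hμ hlead hi hin
  have hzero : 0 < A.charpoly.coeff 0 * μ := coeff_zero_mul_of_mul_X_sub_C_eq hμ ▸ h.b_pos
  have hμ_neg : μ < 0 := by
    by_contra! hμ0
    have hzero_pos := pos_of_mul_pos_left hzero hμ0
    obtain ⟨i, hi⟩ := hK.exists_neg_of_sum_smul_eq_zero (i := 0)
      (fun i : Fin (n + 1) => hA.pow i z h.mem) (sum_charpoly_coeff_smul_eq_zero A z)
      (by simpa [hzero_pos.ne'] using h.ne_zero hK)
    refine hi.not_ge ?_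
    rcases Nat.eq_zero_or_pos (i : ℕ) with hi0 | hi0
    · exact hi0 ▸ hzero_pos.le
    · exact hcoeff i hi0 i.is_le ▸ pow_nonneg hμ0 _
  rcases Nat.le_one_iff_eq_zero_or_eq_one.1 hj with rfl | rfl
  · exact neg_of_mul_pos_left hzero hμ_neg.le
  · rw [hcoeff 1 one_pos hn0]
    exact (Nat.Even.sub_odd hn0 hn odd_one).pow_neg hμ_neg

/-- Walks of length `n * (n - 1)` from `z` reach all `A ^ j *ᵥ z` with `2 ≤ j`; the remaining two
generators have negative coefficients in the linear relation given by the characteristic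
polynomial. -/
theorem pow_mulVec_mem_interior_of_even [NeZero n] (hK : IsProperCone K) (hA : KNonneg K A)
    (hn : Even n) (h : IsWielandtGenerator K A n z b c) :
    A ^ (n * (n - 1)) *ᵥ z ∈ interior K := by
  set w := A ^ (n * (n - 1)) *ᵥ z
  have hreach : ∀ j, 2 ≤ j → j ≤ n → Dominates K w (A ^ j *ᵥ z) := by
    intro j hj hjn
    obtain ⟨q, rfl⟩ := Nat.exists_eq_add_of_le' hj
    obtain ⟨p, hp⟩ := Nat.exists_eq_add_of_le hjn
    have hlength : n * (n - 1) = (n + 1) * p + 1 + n * q + (q + 1) := by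
      rw [hp, show q + 2 + p - 1 = q + 1 + p by lia]
      ring
    simpa only [w, hlength, Reaches] using h.reaches_pow_mulVec hK hA p q (q + 1)
  refine hK.mem_interior_of_dominates_generators h.eq_coneGen (hA.pow _ z h.mem) fun a => ?_
  rcases lt_or_ge (a : ℕ) 2 with ha | ha
  · refine Dominates.of_sum_smul_eq_zero hK (i := a) (hA.pow _ z h.mem)
      (fun i : Fin (n + 1) => hA.pow i z h.mem) (sum_charpoly_coeff_smul_eq_zero A z)
      (fun i hi => hreach i ?_ i.is_le) (h.charpoly_coeff_neg hK hA hn (Nat.le_of_lt_succ ha))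
    by_contra! hlt
    exact hi.not_gt (h.charpoly_coeff_neg hK hA hn (Nat.le_of_lt_succ hlt))
  · exact hreach a ha a.is_le

end IsWielandtGenerator

end EvenDimension

section UpperBound

variable {k n : ℕ} {K : Set (Fin n → ℝ)} {A : Matrix (Fin n) (Fin n) ℝ}
  {x : Fin (k + 1) → Fin n → ℝ}

theorem KPrimitive.expnt_le_mul_sub_one_add_one (hn : 3 ≤ n) (hk : 0 < k) (hK : IsProperCone K)
    (hA : KPrimitive K A) (hKx : K = ConeGen x) (hx0 : ∀ j, x j ≠ 0) :
    expnt K A ≤ k * (n - 1) + 1 := by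
  have : NeZero n := ⟨by lia⟩
  refine expnt_le (Nat.succ_pos _) (KPositive.of_generators hK hKx fun i => ?_)
  by_cases hi : A ^ (k * (n - 1)) *ᵥ x i ∈ interior K
  · exact hA.pow_mulVec_mem_interior_of_le hK (Nat.le_succ _) hi
  · obtain ⟨b, c, h⟩ := hA.exists_isWielandtGenerator hn hk hK hKx hx0 hi
    exact h.pow_mulVec_mem_interior hK hA hk

theorem KPrimitive.expnt_le_of_even (hn : 3 ≤ n) (hev : Even n) (hK : IsProperCone K)
    (hA : KPrimitive K A) {x : Fin (n + 1) → Fin n → ℝ} (hKx : K = ConeGen x)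
    (hx0 : ∀ j, x j ≠ 0) : expnt K A ≤ n * (n - 1) := by
  have : NeZero n := ⟨by lia⟩
  refine expnt_le (Nat.mul_pos (by lia) (by lia)) (KPositive.of_generators hK hKx fun i => ?_)
  by_contra hi
  obtain ⟨b, c, h⟩ := hA.exists_isWielandtGenerator hn (by lia) hK hKx hx0 hi
  exact hi (h.pow_mulVec_mem_interior_of_even hK hA.1 hev)

theorem KPrimitive.expnt_le_of_memP (hn : 3 ≤ n) (hnk : n ≤ k) (hP : MemP (k + 1) K)
    (hA : KPrimitive K A) : expnt K A ≤ k * (k - 1) + if Even k then 0 else 1 := by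
  have hK := hP.1.1
  obtain ⟨x, hKx, hx⟩ := hP.exists_irredundant
  have hle := hA.expnt_le_mul_sub_one_add_one hn (by lia) hK hKx hx.ne_zero
  rcases hnk.lt_or_eq with hlt | rfl
  · calc
      expnt K A ≤ k * (n - 1) + 1 := hle
      _ ≤ k * (n - 1) + k := by lia
      _ = k * (n - 1 + 1) := (Nat.mul_succ _ _).symm
      _ ≤ k * (k - 1) := Nat.mul_le_mul_left k (by lia)
      _ ≤ _ := Nat.le_add_right _ _
  · split_ifs with hev
    · exact hA.expnt_le_of_even hn hev hK hKx hx.ne_zero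
    · exact hle

end UpperBound

section ExtendedOrthants

variable {m n : ℕ}

theorem map_sum_smul {y : Fin m → Fin n → ℝ} (f : (Fin n → ℝ) →ₗ[ℝ] ℝ) (c : Fin m → ℝ) :
    f (∑ j, c j • y j) = ∑ j, c j * f (y j) := by
  simp only [map_sum, map_smul, smul_eq_mul]

theorem nonneg_of_mem_coneGen {y : Fin m → Fin n → ℝ} (f : (Fin n → ℝ) →ₗ[ℝ] ℝ)
    (hf : ∀ i, 0 ≤ f (y i)) {x : Fin n → ℝ} (hx : x ∈ ConeGen y) : 0 ≤ f x := by
  obtain ⟨c, hc, rfl⟩ := hx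
  rw [map_sum_smul]
  exact Finset.sum_nonneg fun j _ => mul_nonneg (hc j) (hf j)

theorem isClosed_coneGen_of_pos {y : Fin m → Fin n → ℝ} (f : (Fin n → ℝ) →ₗ[ℝ] ℝ)
    (hf : ∀ i, 0 < f (y i)) : IsClosed (ConeGen y) := by
  rw [← isSeqClosed_iff_isClosed]
  intro u x hu hux
  choose c hc hcu using hu
  have hfu : Filter.Tendsto (fun t => f (u t)) Filter.atTop (nhds (f x)) :=
    (f.continuous_of_finiteDimensional.tendsto x).comp hux
  obtain ⟨B, hB⟩ := hfu.bddAbove_range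
  have hbox : ∀ t, c t ∈ Set.Icc 0 fun j => B / f (y j) := fun t => by
    refine ⟨hc t, fun j => (le_div_iff₀ (hf j)).2 ?_⟩
    calc c t j * f (y j) ≤ ∑ l, c t l * f (y l) := Finset.single_le_sum
          (fun l _ => mul_nonneg (hc t l) (hf l).le) (Finset.mem_univ j)
      _ = f (u t) := by rw [hcu, map_sum_smul]
      _ ≤ B := hB (mem_range_self t)
  obtain ⟨d, hd, φ, hφ, hlim⟩ := isCompact_Icc.tendsto_subseq hbox
  have hsum : Continuous fun e : Fin m → ℝ => ∑ j, e j • y j := by fun_prop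
  refine ⟨d, hd.1, tendsto_nhds_unique (hux.comp hφ.tendsto_atTop) ?_⟩
  simpa only [Function.comp_def, ← hcu] using (hsum.tendsto d).comp hlim

theorem eq_zero_of_mem_coneGen_of_nonpos {y : Fin m → Fin n → ℝ} (f : (Fin n → ℝ) →ₗ[ℝ] ℝ)
    (hf : ∀ i, 0 < f (y i)) {x : Fin n → ℝ} (hx : x ∈ ConeGen y) (hfx : f x ≤ 0) : x = 0 := by
  obtain ⟨c, hc, rfl⟩ := hx
  have hterm : ∀ j ∈ Finset.univ, 0 ≤ c j * f (y j) := fun j _ => mul_nonneg (hc j) (hf j).le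
  rw [map_sum_smul] at hfx
  have hzero := (Finset.sum_eq_zero_iff_of_nonneg hterm).1
    (hfx.antisymm (Finset.sum_nonneg hterm))
  refine Finset.sum_eq_zero fun j hj => ?_
  rw [(mul_eq_zero.1 (hzero j hj)).resolve_right (hf j).ne', zero_smul]

theorem isProperCone_coneGen_of_pos {y : Fin m → Fin n → ℝ} (f : (Fin n → ℝ) →ₗ[ℝ] ℝ)
    (hf : ∀ i, 0 < f (y i)) (hint : (interior (ConeGen y)).Nonempty) :
    IsProperCone (ConeGen y) := by
  refine ⟨isClosed_coneGen_of_pos f hf, ?_, ?_, Subset.antisymm ?_ ?_, hint⟩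
  · rw [coneGen_eq_hull]
    exact fun x hx x' hx' => add_mem hx hx'
  · rw [coneGen_eq_hull]
    exact fun c hc x hx => PointedCone.smul_mem _ hc hx
  · rintro x ⟨hx, hx'⟩
    have hneg : 0 ≤ f (-x) := nonneg_of_mem_coneGen f (fun i => (hf i).le) hx'
    exact eq_zero_of_mem_coneGen_of_nonpos f hf hx (by simpa using hneg)
  · rw [coneGen_eq_hull, singleton_subset_iff]
    exact ⟨zero_mem _, by simp⟩

/-- The standard basis of `ℝ^n` followed by one further vector `v`. -/
def basisSnoc (v : Fin n → ℝ) : Fin (n + 1) → Fin n → ℝ :=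
  Fin.snoc (α := fun _ => Fin n → ℝ) (fun j => Pi.single j 1) v

@[simp]
theorem basisSnoc_castSucc (v : Fin n → ℝ) (j : Fin n) :
    basisSnoc v j.castSucc = Pi.single j 1 :=
  Fin.snoc_castSucc (α := fun _ => Fin n → ℝ) ..

@[simp]
theorem basisSnoc_last (v : Fin n → ℝ) : basisSnoc v (Fin.last n) = v :=
  Fin.snoc_last (α := fun _ => Fin n → ℝ) ..

theorem single_one_apply_nonneg (i j : Fin n) : 0 ≤ (Pi.single i 1 : Fin n → ℝ) j :=
  (Pi.single_nonneg.2 zero_le_one : (0 : Fin n → ℝ) ≤ Pi.single i 1) j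

theorem interior_coneGen_basisSnoc_nonempty (v : Fin n → ℝ) :
    (interior (ConeGen (basisSnoc v))).Nonempty := by
  have hsub : Set.pi univ (fun _ : Fin n => Ioi (0 : ℝ)) ⊆ ConeGen (basisSnoc v) := fun x hx => by
    rw [coneGen_eq_hull, ← Finset.univ_sum_single x]
    refine Submodule.sum_mem _ fun j _ => ?_
    rw [← mul_one (x j), ← smul_eq_mul, Pi.single_smul]
    exact PointedCone.smul_mem _ (hx j trivial).le
      (PointedCone.subset_hull ⟨j.castSucc, basisSnoc_castSucc v j⟩)
  exact ⟨1, mem_interior.2 ⟨_, hsub, isOpen_set_pi finite_univ fun _ _ => isOpen_Ioi,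
    fun _ _ => zero_lt_one (α := ℝ)⟩⟩

variable {v : Fin n → ℝ} {p q r : Fin n}

theorem isProperCone_coneGen_basisSnoc (hp : 0 < v p) : IsProperCone (ConeGen (basisSnoc v)) := by
  set t := (1 + |∑ j, v j|) / v p with ht
  let f : (Fin n → ℝ) →ₗ[ℝ] ℝ := ∑ j, LinearMap.proj j + t • LinearMap.proj p
  have hf : ∀ u, f u = ∑ j, u j + t * u p := fun u => by simp [f]
  refine isProperCone_coneGen_of_pos f (fun i => ?_) (interior_coneGen_basisSnoc_nonempty v)
  cases i using Fin.lastCases with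
  | last =>
    rw [basisSnoc_last, hf, ht, div_mul_cancel₀ _ hp.ne']
    linarith [neg_abs_le (∑ j, v j)]
  | cast j =>
    have htp : 0 ≤ t * (Pi.single j 1 : Fin n → ℝ) p := mul_nonneg (by positivity)
      (single_one_apply_nonneg j p)
    rw [basisSnoc_castSucc, hf, Fintype.sum_pi_single']
    linarith

theorem isIrredundant_basisSnoc (hpq : p ≠ q) (hp : 0 < v p) (hq : 0 < v q) (hr : v r < 0) :
    IsIrredundant (basisSnoc v) := by
  refine IsIrredundant.of_separating fun i => ?_
  cases i using Fin.lastCases with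
  | last =>
    refine ⟨LinearMap.proj r, by simpa using hr, fun l hl => ?_⟩
    obtain ⟨l, rfl⟩ := Fin.exists_castSucc_eq.2 hl
    simpa using single_one_apply_nonneg l r
  | cast j =>
    obtain ⟨s, hsj, hs⟩ : ∃ s, s ≠ j ∧ 0 < v s := by
      rcases ne_or_eq p j with hpj | rfl
      exacts [⟨p, hpj, hp⟩, ⟨q, hpq.symm, hq⟩]
    refine ⟨|v j| • LinearMap.proj s - v s • LinearMap.proj j, by simp [hsj, hs], fun l hl => ?_⟩
    cases l using Fin.lastCases with
    | last =>
      simpa [mul_comm (v s)] using mul_le_mul_of_nonneg_right (le_abs_self (v j)) hs.le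
    | cast l =>
      have hlj : j ≠ l := fun h => hl (h ▸ rfl)
      simpa [hlj] using mul_nonneg (abs_nonneg (v j)) (single_one_apply_nonneg l s)

theorem memP_coneGen_basisSnoc (hpq : p ≠ q) (hp : 0 < v p) (hq : 0 < v q) (hr : v r < 0) :
    MemP (n + 1) (ConeGen (basisSnoc v)) :=
  (isIrredundant_basisSnoc hpq hp hq hr).memP (isProperCone_coneGen_basisSnoc hp)

end ExtendedOrthants

section LowerBound

theorem KPrimitive.lt_expnt {n : ℕ} [NeZero n] {K : Set (Fin n → ℝ)}
    {A : Matrix (Fin n) (Fin n) ℝ} (hK : IsProperCone K) (hA : KPrimitive K A)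
    (f : (Fin n → ℝ) →ₗ[ℝ] ℝ) (hf : ∀ x ∈ K, 0 ≤ f x) {z : Fin n → ℝ} (hz : z ∈ K)
    (hfz : 0 < f z) {t : ℕ} (ht : f (A ^ t *ᵥ z) = 0) : t < expnt K A := by
  by_contra! hle
  have hz0 : z ≠ 0 := by
    rintro rfl
    simp at hfz
  have hpos : KPositive K (A ^ expnt K A) := (Nat.sInf_mem hA.2).2
  obtain ⟨c, hc, hdom⟩ := dominates_of_mem_interior
    (hA.pow_mulVec_mem_interior_of_le hK hle (hpos z hz hz0)) z
  have h := hf _ hdom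
  rw [map_sub, map_smul, ht, zero_sub, smul_eq_mul, neg_nonneg] at h
  exact (mul_pos hc hfz).not_ge h

theorem exists_eq_add_of_ne_zero_of_recurrence {R : Type*} [Semiring R] {b c : R} {a : ℕ → R}
    {n : ℕ} (hn : 0 < n) (hrec : ∀ t, a (t + (n + 1)) = b * a t + c * a (t + 1)) {t : ℕ}
    (ht : 0 < t) (ht0 : a t ≠ 0) :
    ∃ s, 0 < s ∧ s ≤ n + 1 ∧ a s ≠ 0 ∧ ∃ p q, t = s + p + (p + q) * n := by
  induction t using Nat.strong_induction_on with
  | _ t ih =>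
    rcases le_or_gt t (n + 1) with hle | hgt
    · exact ⟨t, ht, hle, ht0, 0, 0, by simp⟩
    obtain ⟨r, rfl⟩ := Nat.exists_eq_add_of_le' hgt.le
    by_cases hr : a r = 0
    · have hr1 : a (r + 1) ≠ 0 := fun h1 => ht0 (by rw [hrec, hr, h1, mul_zero, mul_zero, add_zero])
      obtain ⟨s, hs, hsn, hs0, p, q, hrs⟩ := ih (r + 1) (by lia) (by lia) hr1
      exact ⟨s, hs, hsn, hs0, p, q + 1, by linear_combination hrs⟩
    · obtain ⟨s, hs, hsn, hs0, p, q, hrs⟩ := ih r (by lia) (by lia) hr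
      exact ⟨s, hs, hsn, hs0, p + 1, q, by linear_combination hrs⟩

theorem add_mul_ne_mul_sub_one {n u w : ℕ} (hu : 0 < u) (huw : u ≤ w + 1) :
    u + w * n ≠ n * (n - 1) := by
  intro h
  have hdvd : n ∣ u := (Nat.dvd_add_left (Dvd.intro_left w rfl)).1 (h ▸ Dvd.intro _ rfl)
  have hnu : n ≤ u := Nat.le_of_dvd hu hdvd
  have hmul : (n - 1) * n ≤ w * n := Nat.mul_le_mul_right n (by lia)
  rw [mul_comm n] at h
  lia

namespace IsWielandtGenerator

variable {k n : ℕ} {K : Set (Fin n → ℝ)} {A : Matrix (Fin n) (Fin n) ℝ}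
  {z : Fin n → ℝ} {b c : ℝ}

theorem map_pow_mulVec (h : IsWielandtGenerator K A k z b c) (f : (Fin n → ℝ) →ₗ[ℝ] ℝ) (t : ℕ) :
    f (A ^ (t + (k + 1)) *ᵥ z) = b * f (A ^ t *ᵥ z) + c * f (A ^ (t + 1) *ᵥ z) := by
  rw [pow_add, ← mulVec_mulVec, h.pow_succ_mulVec, mulVec_add, mulVec_smul, mulVec_smul,
    mulVec_mulVec, ← pow_succ, map_add, map_smul, map_smul, smul_eq_mul, smul_eq_mul]

variable [NeZero n]

theorem lt_expnt (hK : IsProperCone K) (hk : 0 < k) (h : IsWielandtGenerator K A k z b c)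
    (f : (Fin n → ℝ) →ₗ[ℝ] ℝ) (hf : ∀ a ≤ k, 0 ≤ f (A ^ a *ᵥ z)) (hfz : 0 < f z) {t : ℕ}
    (ht : 0 < t)
    (hne : ∀ s, 0 < s → s ≤ k + 1 → f (A ^ s *ᵥ z) ≠ 0 → ∀ p q, t ≠ s + p + (p + q) * k) :
    t < expnt K A := by
  refine (h.kPrimitive hK hk).lt_expnt hK f (fun x hx => ?_) h.mem hfz ?_
  · exact nonneg_of_mem_coneGen f (fun a => hf a a.is_le) (h.eq_coneGen ▸ hx)
  · by_contra ht0
    obtain ⟨s, hs, hsk, hs0, p, q, hst⟩ :=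
      exists_eq_add_of_ne_zero_of_recurrence (a := fun t => f (A ^ t *ᵥ z)) hk
        (h.map_pow_mulVec f) ht ht0
    exact hne s hs hsk hs0 p q hst

theorem mul_sub_one_lt_expnt (hK : IsProperCone K) (hk : 2 ≤ k)
    (h : IsWielandtGenerator K A k z b c) (f : (Fin n → ℝ) →ₗ[ℝ] ℝ) (hfz : 0 < f z)
    (hf1 : 0 ≤ f (A *ᵥ z)) (hf : ∀ a, 2 ≤ a → a ≤ k → f (A ^ a *ᵥ z) = 0) :
    k * (k - 1) < expnt K A := by
  refine h.lt_expnt hK (by lia) f (fun a ha => ?_) hfz (Nat.mul_pos (by lia) (by lia)) ?_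
  · match a with
    | 0 => simpa using hfz.le
    | 1 => simpa using hf1
    | a + 2 => exact (hf _ (by lia) ha).ge
  · intro s hs hsk hs0 p q ht
    obtain rfl | rfl : s = 1 ∨ s = k + 1 := by
      by_contra! hs1
      exact hs0 (hf s (by lia) (by lia))
    · exact add_mul_ne_mul_sub_one (u := p + 1) (w := p + q) (n := k) (by lia) (by lia)
        (by linarith)
    · exact add_mul_ne_mul_sub_one (u := p + 1) (w := p + q + 1) (n := k) (by lia) (by lia)
        (by linarith)

theorem mul_sub_one_le_expnt (hK : IsProperCone K) (hk : 3 ≤ k)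
    (h : IsWielandtGenerator K A k z b c) (f : (Fin n → ℝ) →ₗ[ℝ] ℝ) (hfz : 0 < f z)
    (hf : ∀ a, 0 < a → a < k → f (A ^ a *ᵥ z) = 0) (hfk : 0 ≤ f (A ^ k *ᵥ z)) :
    k * (k - 1) ≤ expnt K A := by
  have hmul : 3 * 2 ≤ k * (k - 1) := Nat.mul_le_mul hk (by lia)
  suffices hlt : k * (k - 1) - 1 < expnt K A by lia
  refine h.lt_expnt hK (by lia) f (fun a ha => ?_) hfz (by lia) ?_
  · rcases a.eq_zero_or_pos with rfl | ha0
    · simpa using hfz.le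
    rcases ha.lt_or_eq with hak | rfl
    exacts [(hf a ha0 hak).ge, hfk]
  · intro s hs hsk hs0 p q ht
    replace ht : s + p + (p + q) * k + 1 = k * (k - 1) := by lia
    obtain rfl | rfl : s = k ∨ s = k + 1 := by
      by_contra! hs1
      exact hs0 (hf s hs (by lia))
    · exact add_mul_ne_mul_sub_one (u := p + 1) (w := p + q + 1) (n := s) (by lia) (by lia)
        (by linarith)
    · exact add_mul_ne_mul_sub_one (u := p + 2) (w := p + q + 1) (n := k) (by lia) (by lia)
        (by linarith)

end IsWielandtGenerator

/-- The companion matrix with last column `v`. -/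
def companion {k : ℕ} (v : Fin (k + 1) → ℝ) : Matrix (Fin (k + 1)) (Fin (k + 1)) ℝ :=
  of fun i => Fin.snoc (α := fun _ => ℝ) (fun j : Fin k => if i = j.succ then 1 else 0) (v i)

section Companion

variable {k : ℕ} (v : Fin (k + 1) → ℝ)

theorem companion_mulVec_zero (w : Fin (k + 1) → ℝ) :
    (companion v *ᵥ w) 0 = w (Fin.last k) * v 0 := by
  simp [companion, mulVec, dotProduct, Fin.sum_univ_castSucc, mul_comm, (Fin.succ_ne_zero _).symm]

theorem companion_mulVec_succ (w : Fin (k + 1) → ℝ) (i : Fin k) :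
    (companion v *ᵥ w) i.succ = w i.castSucc + w (Fin.last k) * v i.succ := by
  simp [companion, mulVec, dotProduct, Fin.sum_univ_castSucc, mul_comm]

theorem companion_mulVec_single_castSucc (j : Fin k) :
    companion v *ᵥ Pi.single j.castSucc 1 = Pi.single j.succ 1 := by
  ext i
  simp [companion, Pi.single_apply]

theorem companion_mulVec_single_last : companion v *ᵥ Pi.single (Fin.last k) 1 = v := by
  ext i
  simp [companion]

theorem companion_pow_mulVec_single_zero (j : Fin (k + 1)) :
    companion v ^ (j : ℕ) *ᵥ Pi.single 0 1 = Pi.single j 1 := by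
  induction j using Fin.induction with
  | zero => rw [Fin.val_zero, pow_zero, one_mulVec]
  | succ j ih =>
    rw [Fin.val_succ, pow_succ', ← mulVec_mulVec, ← Fin.val_castSucc, ih,
      companion_mulVec_single_castSucc]

theorem companion_pow_succ_mulVec_single_zero :
    companion v ^ (k + 1) *ᵥ Pi.single 0 1 = v := by
  have h := companion_pow_mulVec_single_zero v (Fin.last k)
  rw [Fin.val_last] at h
  rw [pow_succ', ← mulVec_mulVec, h, companion_mulVec_single_last]

theorem companion_pow_mulVec_single_zero_eq_basisSnoc (a : Fin (k + 2)) :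
    companion v ^ (a : ℕ) *ᵥ Pi.single 0 1 = basisSnoc v a := by
  cases a using Fin.lastCases with
  | last => rw [Fin.val_last, companion_pow_succ_mulVec_single_zero, basisSnoc_last]
  | cast j => rw [Fin.val_castSucc, companion_pow_mulVec_single_zero, basisSnoc_castSucc]

end Companion

section SlowMatrix

variable {l : ℕ}

/-- The last column of a companion matrix whose exponent is extremal. Its entries are those for
which the characteristic polynomial is `(t ^ (l + 3) - (2 + (-1) ^ l) * t - 2) / (t + 1)`. -/
def slowColumn (l : ℕ) : Fin (l + 2) → ℝ :=
  Fin.cons 2 fun i => (-1) ^ (l + i : ℕ)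

theorem slowColumn_zero : slowColumn l 0 = 2 :=
  rfl

theorem slowColumn_succ (i : Fin (l + 1)) : slowColumn l i.succ = (-1) ^ (l + i : ℕ) :=
  rfl

theorem slowColumn_last : slowColumn l (Fin.last (l + 1)) = 1 := by
  rw [← Fin.succ_last, slowColumn_succ, Fin.val_last, ← two_mul, pow_mul, neg_one_sq, one_pow]

theorem companion_mulVec_slowColumn :
    companion (slowColumn l) *ᵥ slowColumn l =
      (2 : ℝ) • Pi.single 0 1 + (2 + (-1) ^ l : ℝ) • Pi.single 1 1 := by
  ext i
  cases i using Fin.cases with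
  | zero => simp [companion_mulVec_zero, slowColumn_last, slowColumn_zero]
  | succ i =>
    rw [companion_mulVec_succ, slowColumn_last, one_mul, slowColumn_succ]
    cases i using Fin.cases with
    | zero => simp [slowColumn_zero]
    | succ i =>
      have hi : i.succ.succ ≠ 1 := (Fin.succ_injective _).ne (Fin.succ_ne_zero i)
      rw [← Fin.succ_castSucc, slowColumn_succ]
      simp [pow_succ, ← add_assoc, Pi.single_eq_of_ne hi]

/-- The cone generated by the standard basis and `slowColumn l`. -/
def slowCone (l : ℕ) : Set (Fin (l + 2) → ℝ) :=
  ConeGen (basisSnoc (slowColumn l))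

theorem isWielandtGenerator_slowCone :
    IsWielandtGenerator (slowCone l) (companion (slowColumn l)) (l + 2) (Pi.single 0 1) 2
      (2 + (-1) ^ l) where
  b_pos := two_pos
  c_pos := by rcases neg_one_pow_eq_or ℝ l with h | h <;> rw [h] <;> norm_num
  pow_succ_mulVec := by
    rw [pow_succ', ← mulVec_mulVec, companion_pow_succ_mulVec_single_zero,
      companion_mulVec_slowColumn, ← Fin.succ_zero_eq_one, ← companion_mulVec_single_castSucc,
      Fin.castSucc_zero]
  eq_coneGen := congrArg ConeGen <| funext fun a =>
    (companion_pow_mulVec_single_zero_eq_basisSnoc (slowColumn l) a).symm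

theorem isProperCone_slowCone : IsProperCone (slowCone l) :=
  isProperCone_coneGen_basisSnoc (p := 0) two_pos

theorem kPrimitive_slowCone : KPrimitive (slowCone l) (companion (slowColumn l)) :=
  isWielandtGenerator_slowCone.kPrimitive isProperCone_slowCone (Nat.succ_pos _)

theorem memP_slowCone : MemP (l + 4) (slowCone (l + 1)) := by
  have h1 : slowColumn (l + 1) 1 = (-1) ^ (l + 1) := slowColumn_succ 0
  have h2 : slowColumn (l + 1) 2 = (-1) ^ (l + 2) := slowColumn_succ 1
  rcases Nat.even_or_odd l with hl | hl
  · exact memP_coneGen_basisSnoc (p := 0) (q := 2) (r := 1) (Fin.succ_ne_zero 1).symm two_pos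
      (by rw [h2]; simp [hl.neg_one_pow, pow_succ]) (by rw [h1]; simp [hl.neg_one_pow, pow_succ])
  · exact memP_coneGen_basisSnoc (p := 0) (q := 1) (r := 2) (by simp) two_pos
      (by rw [h1]; simp [hl.neg_one_pow, pow_succ]) (by rw [h2]; simp [hl.neg_one_pow, pow_succ])

theorem mul_le_expnt_slowCone (hl : 0 < l) :
    (l + 2) * (l + 1) ≤ expnt (slowCone l) (companion (slowColumn l)) := by
  refine isWielandtGenerator_slowCone.mul_sub_one_le_expnt isProperCone_slowCone
    (by lia) (LinearMap.proj 0) (by simp) (fun a ha hak => ?_) ?_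
  · rw [companion_pow_mulVec_single_zero (slowColumn l) ⟨a, hak⟩]
    simp [Fin.ext_iff, ha.ne]
  · rw [companion_pow_succ_mulVec_single_zero]
    exact two_pos.le

theorem mul_lt_expnt_slowCone_of_odd (hl : Odd l) :
    (l + 2) * (l + 1) < expnt (slowCone l) (companion (slowColumn l)) := by
  refine isWielandtGenerator_slowCone.mul_sub_one_lt_expnt isProperCone_slowCone
    (by lia) (LinearMap.proj 0 + (2 : ℝ) • LinearMap.proj 1) (by simp) ?_ fun a ha hak => ?_
  · rw [← Fin.castSucc_zero, companion_mulVec_single_castSucc]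
    simp
  · rcases hak.lt_or_eq with hak | rfl
    · rw [companion_pow_mulVec_single_zero (slowColumn l) ⟨a, hak⟩]
      have h0 : (0 : Fin (l + 2)) ≠ ⟨a, hak⟩ := Fin.ne_of_val_ne (by rw [Fin.val_zero]; lia)
      have h1 : (1 : Fin (l + 2)) ≠ ⟨a, hak⟩ := Fin.ne_of_val_ne (by rw [Fin.val_one]; lia)
      simp [Pi.single_eq_of_ne h0, Pi.single_eq_of_ne h1]
    · rw [companion_pow_succ_mulVec_single_zero]
      have h1 : slowColumn l 1 = (-1) ^ l := slowColumn_succ 0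
      simp [slowColumn_zero, h1, hl.neg_one_pow]

theorem exists_memP_kPrimitive_le_expnt {n : ℕ} (hn : 3 ≤ n) :
    ∃ (K : Set (Fin n → ℝ)) (A : Matrix (Fin n) (Fin n) ℝ), MemP (n + 1) K ∧ KPrimitive K A ∧
      n * (n - 1) + (if Even n then 0 else 1) ≤ expnt K A := by
  obtain ⟨l, rfl⟩ := Nat.exists_eq_add_of_le' hn
  refine ⟨slowCone (l + 1), companion (slowColumn (l + 1)), memP_slowCone, kPrimitive_slowCone, ?_⟩
  split_ifs with hl
  · exact mul_le_expnt_slowCone l.succ_pos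
  · exact mul_lt_expnt_slowCone_of_odd (by grind)

end SlowMatrix

end LowerBound

theorem sq_sub_three_mul_add_eq {k : ℕ} (hk : 2 ≤ k) :
    (if Even (k + 1) then (k + 1) ^ 2 - 3 * (k + 1) + 3 else (k + 1) ^ 2 - 3 * (k + 1) + 2) =
      k * (k - 1) + if Even k then 0 else 1 := by
  obtain ⟨j, rfl⟩ := Nat.exists_eq_add_of_le' hk
  have hsub : (j + 2 + 1) ^ 2 - 3 * (j + 2 + 1) = j * (j + 3) := by
    rw [pow_two, ← Nat.sub_mul]
    rfl
  have hmul : (j + 2) * (j + 2 - 1) = j * (j + 3) + 2 := by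
    rw [Nat.add_sub_assoc one_le_two]
    ring
  simp only [hsub, hmul, Nat.even_add_one]
  split_ifs <;> lia

/-- For `m ≥ 4`, the maximum of `γ(K)` over all non-simplicial polyhedral cones with `m`
extreme rays (i.e. `K ∈ P(m,n)` with `3 ≤ n < m`) is `m² - 3m + 3` if `m` is even and
`m² - 3m + 2` if `m` is odd. -/
theorem stmt_5 (m : ℕ) (hm : 4 ≤ m) :
    (∀ (n : ℕ) (K : Set (Fin n → ℝ)) (A : Matrix (Fin n) (Fin n) ℝ),
      3 ≤ n → n < m → MemP m K → KPrimitive K A →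
      expnt K A ≤ if Even m then m ^ 2 - 3 * m + 3 else m ^ 2 - 3 * m + 2) ∧
    (∃ (n : ℕ) (K : Set (Fin n → ℝ)) (A : Matrix (Fin n) (Fin n) ℝ),
      3 ≤ n ∧ n < m ∧ MemP m K ∧ KPrimitive K A ∧
      expnt K A = if Even m then m ^ 2 - 3 * m + 3 else m ^ 2 - 3 * m + 2) := by
  obtain ⟨k, rfl⟩ := Nat.exists_eq_succ_of_ne_zero (by lia : m ≠ 0)
  rw [Nat.succ_eq_add_one, sq_sub_three_mul_add_eq (by lia)]
  have hupper : ∀ (n : ℕ) (K : Set (Fin n → ℝ)) (A : Matrix (Fin n) (Fin n) ℝ), 3 ≤ n →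
      n < k + 1 → MemP (k + 1) K → KPrimitive K A →
      expnt K A ≤ k * (k - 1) + if Even k then 0 else 1 := fun n K A hn hnk hK hA =>
    hA.expnt_le_of_memP hn (Nat.le_of_lt_succ hnk) hK
  have hk : 3 ≤ k := by lia
  obtain ⟨K, A, hK, hA, hlower⟩ := exists_memP_kPrimitive_le_expnt hk
  exact ⟨hupper, k, K, A, hk, k.lt_succ_self, hK, hA,
    (hupper k K A hk k.lt_succ_self hK hA).antisymm hlower⟩
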